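/- The set Prim(ℬ) = {x ∈ ℬ : Δ(x) = x ⊗ ε + ε ⊗ x} of primitive elements of ℬ is a Lie subalgebra of ℬ for the bracket [x, y] = x ⋆ y − y ⋆ x, and as a Lie algebra over ℂ it is isomorphic to the free Lie algebra on the set 𝔾 of nonempty indivisible B-diagrams. -/

import Mathlib

open scoped BigOperators

structure BD where
  lam : List ℕ
  up : Finset ℕ
  dn : Finset ℕ
  ed : Finset (ℕ × ℕ)
deriving DecidableEq

namespace BD

/-- number of vertices -/
def nv (G : BD) : ℕ := G.lam.length

/-- number of half-edges -/
def omega (G : BD) : ℕ := G.lam.sum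

/-- the vertex to which a half-edge belongs -/
def v (G : BD) (k : ℕ) : ℕ :=
  (List.range G.lam.length).countP (fun i => (G.lam.take i).sum < k)

def Valid (G : BD) : Prop :=
  (∀ x ∈ G.lam, 0 < x) ∧
  G.up ⊆ Finset.Icc 1 G.omega ∧
  G.dn ⊆ Finset.Icc 1 G.omega ∧
  (∀ p ∈ G.ed, p.1 ∈ G.up ∧ p.2 ∈ G.dn ∧ G.v p.1 < G.v p.2) ∧
  (∀ p ∈ G.ed, ∀ q ∈ G.ed, p.1 = q.1 → p = q) ∧
  (∀ p ∈ G.ed, ∀ q ∈ G.ed, p.2 = q.2 → p = q)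

def eps : BD := ⟨[], ∅, ∅, ∅⟩

theorem eps_valid : eps.Valid := by
  refine ⟨?_, ?_, ?_, ?_, ?_, ?_⟩ <;> simp [eps, Valid, omega]

def HfUp (G : BD) : Finset ℕ := G.up \ G.ed.image Prod.fst
def HfDn (G : BD) : Finset ℕ := G.dn \ G.ed.image Prod.snd
def hfUp (G : BD) : ℕ := G.HfUp.card
def hfDn (G : BD) : ℕ := G.HfDn.card
def hc (G : BD) : ℕ :=
  (G.omega - G.ed.card - G.hfUp) + (G.omega - G.ed.card - G.hfDn)

/-- composition of `G'` over `G` along a matching `s` -/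
def comp (G G' : BD) (s : Finset (ℕ × ℕ)) : BD where
  lam := G.lam ++ G'.lam
  up := G.up ∪ G'.up.image (· + G.omega)
  dn := G.dn ∪ G'.dn.image (· + G.omega)
  ed := G.ed ∪ s.image (fun p => (p.1, p.2 + G.omega)) ∪
        G'.ed.image (fun p => (p.1 + G.omega, p.2 + G.omega))

/-- `s` encodes a strictly increasing sequence `a₁ < ⋯ < a_k` of elements of `H_f↑(G)`
matched with pairwise distinct elements `b₁,…,b_k` of `H_f↓(G')`. -/
def Matching (G G' : BD) (s : Finset (ℕ × ℕ)) : Prop :=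
  (∀ p ∈ s, p.1 ∈ G.HfUp ∧ p.2 ∈ G'.HfDn) ∧
  (∀ p ∈ s, ∀ q ∈ s, p.1 = q.1 → p = q) ∧
  (∀ p ∈ s, ∀ q ∈ s, p.2 = q.2 → p = q)

open scoped Classical in
noncomputable def matchings (G G' : BD) : Finset (Finset (ℕ × ℕ)) :=
  (G.HfUp ×ˢ G'.HfDn).powerset.filter (fun s => Matching G G' s)

/-- juxtaposition -/
def juxt (G G' : BD) : BD := comp G G' ∅

def Indiv (G : BD) : Prop :=
  ∀ G₁ G₂ : BD, G₁.Valid → G₂.Valid → G = juxt G₁ G₂ → G₁ = G ∨ G₂ = G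

/-- half-edges attached to the vertices in `I` -/
def HI (G : BD) (I : Finset ℕ) : Finset ℕ :=
  (Finset.Icc 1 G.omega).filter (fun k => G.v k ∈ I)

/-- the increasing relabelling bijection -/
def phi (G : BD) (I : Finset ℕ) (k : ℕ) : ℕ := ((G.HI I).filter (· ≤ k)).card

/-- sub-B-diagram on the set of vertices `I` -/
def sub (G : BD) (I : Finset ℕ) : BD where
  lam := ((List.range G.lam.length).filter (fun i => i + 1 ∈ I)).map (fun i => G.lam.getD i 0)
  up := (G.up ∩ G.HI I).image (G.phi I)
  dn := (G.dn ∩ G.HI I).image (G.phi I)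
  ed := (G.ed.filter (fun p => G.v p.1 ∈ I ∧ G.v p.2 ∈ I)).image
          (fun p => (G.phi I p.1, G.phi I p.2))

def Isolated (G : BD) (I : Finset ℕ) : Prop :=
  ∀ p ∈ G.ed, (G.v p.1 ∈ I ↔ G.v p.2 ∈ I)

def Connected (G : BD) : Prop :=
  ∀ i j : ℕ, 1 ≤ i → i < j → j ≤ G.nv →
    ∃ (k : ℕ) (c : Fin (k + 1) → ℕ × ℕ),
      (∀ ℓ, c ℓ ∈ G.ed) ∧
      (i = G.v (c 0).1 ∨ i = G.v (c 0).2) ∧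
      (j = G.v (c (Fin.last k)).1 ∨ j = G.v (c (Fin.last k)).2) ∧
      ∀ ℓ : Fin k,
        G.v (c ℓ.castSucc).1 = G.v (c ℓ.succ).1 ∨ G.v (c ℓ.castSucc).1 = G.v (c ℓ.succ).2 ∨
        G.v (c ℓ.castSucc).2 = G.v (c ℓ.succ).1 ∨ G.v (c ℓ.castSucc).2 = G.v (c ℓ.succ).2

def IsConnComp (G : BD) (I : Finset ℕ) : Prop :=
  I ⊆ Finset.Icc 1 G.nv ∧ I.Nonempty ∧ (G.sub I).Connected ∧
  ∀ J : Finset ℕ, I ⊆ J → J ⊆ Finset.Icc 1 G.nv → (G.sub J).Connected → J = I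

end BD

open scoped TensorProduct

/-- B-diagrams -/
abbrev BDiagram := {G : BD // G.Valid}

/-- the free `ℂ`-vector space on the set of B-diagrams -/
abbrev BSpace := BDiagram →₀ ℂ

open scoped Classical in
noncomputable def mkB (G : BD) : BSpace :=
  if h : G.Valid then Finsupp.single ⟨G, h⟩ 1 else 0

noncomputable def unitB : BSpace := Finsupp.single ⟨BD.eps, BD.eps_valid⟩ 1

noncomputable def liftB {V : Type*} [AddCommMonoid V] [Module ℂ V] (f : BDiagram → V) :
    BSpace →ₗ[ℂ] V :=
  Finsupp.lsum ℂ fun A => LinearMap.toSpanSingleton ℂ V (f A)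

noncomputable def mulfun (A B : BDiagram) : BSpace :=
  ∑ s ∈ BD.matchings A.1 B.1, mkB (BD.comp A.1 B.1 s)

/-- the product ⋆ of the algebra of B-diagrams, as a bilinear map -/
noncomputable def starB : BSpace →ₗ[ℂ] BSpace →ₗ[ℂ] BSpace :=
  liftB fun A => liftB fun B => mulfun A B

open scoped Classical in
/-- the coproduct evaluated on a B-diagram -/
noncomputable def dfun (A : BDiagram) : BSpace ⊗[ℂ] BSpace :=
  ∑ I ∈ (Finset.Icc 1 A.1.nv).powerset.filter (fun I => A.1.Isolated I),
    mkB (A.1.sub I) ⊗ₜ[ℂ] mkB (A.1.sub (Finset.Icc 1 A.1.nv \ I))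

/-- the coproduct Δ of ℬ -/
noncomputable def deltaL : BSpace →ₗ[ℂ] BSpace ⊗[ℂ] BSpace := liftB dfun

/-- the counit of ℬ -/
noncomputable def counitB : BSpace →ₗ[ℂ] ℂ :=
  liftB fun A => if A.1 = BD.eps then (1 : ℂ) else 0

/-- the set 𝔾 of nonempty indivisible B-diagrams -/
abbrev GSet := {A : BDiagram // A.1 ≠ BD.eps ∧ A.1.Indiv}

/-- the set of primitive elements of ℬ -/
noncomputable def PrimB : Set BSpace :=
  {x : BSpace | deltaL x = x ⊗ₜ[ℂ] unitB + unitB ⊗ₜ[ℂ] x}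

/-!
Since the primitive elements of a free associative algebra form the free Lie algebra on its
generators (Friedrichs), it suffices to identify `(ℬ, ⋆, Δ)` with the free algebra on `𝔾`, with
primitive generators.

Adding edges between free half-edges in all possible ways gives a unitriangular map that turns
juxtaposition into `⋆` and commutes with `Δ`, so `⋆` may be replaced by juxtaposition, for which the
B-diagrams form a free monoid on `𝔾` by Levi's lemma. The generators can then be made primitive:
subtracting from each `A ∈ 𝔾` suitable products of B-diagrams with fewer vertices gives a primitive
element with leading term `A`, and by triangularity these elements again generate freely.
-/

attribute [local instance 100] LieRing.ofAssociativeRing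

/-! ### Friedrichs' theorem -/

section Primitive

variable {R A : Type*} [CommRing R] [Ring A] [Algebra R A]

/-- The Lie algebra of primitive elements of an algebra `A` with respect to an algebra morphism
`Δ : A → A ⊗ A`, playing the role of a coproduct. -/
def primitiveSubalgebra (Δ : A →ₐ[R] A ⊗[R] A) : LieSubalgebra R A where
  carrier := {a | Δ a = a ⊗ₜ 1 + 1 ⊗ₜ a}
  zero_mem' := by simp
  add_mem' {a b} (ha : Δ a = _) (hb : Δ b = _) := by
    change Δ (a + b) = _
    rw [map_add, ha, hb, TensorProduct.add_tmul, TensorProduct.tmul_add]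
    abel
  smul_mem' c a (ha : Δ a = _) := by
    change Δ (c • a) = _
    rw [map_smul, ha, smul_add, TensorProduct.smul_tmul', TensorProduct.tmul_smul]
  lie_mem' {a b} (ha : Δ a = _) (hb : Δ b = _) := by
    change Δ ⁅a, b⁆ = _
    rw [LieRing.of_associative_ring_bracket, map_sub, map_mul, map_mul, ha, hb]
    simp only [mul_add, add_mul, Algebra.TensorProduct.tmul_mul_tmul, one_mul, mul_one,
      TensorProduct.sub_tmul, TensorProduct.tmul_sub]
    abel

theorem mem_primitiveSubalgebra {Δ : A →ₐ[R] A ⊗[R] A} {a : A} :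
    a ∈ primitiveSubalgebra Δ ↔ Δ a = a ⊗ₜ 1 + 1 ⊗ₜ a :=
  Iff.rfl

end Primitive

section Friedrichs

variable {K V X : Type*}

theorem bijective_of_iSup_eigenspace_eq_top [Field K] [AddCommGroup V] [Module K V]
    {E : Module.End K V} (h : ⨆ μ ≠ 0, E.eigenspace μ = ⊤) : Function.Bijective E := by
  constructor
  · have hker : Disjoint (E.eigenspace 0) ⊤ := h ▸ E.eigenspaces_iSupIndep 0
    rwa [disjoint_top, Module.End.eigenspace_zero, LinearMap.ker_eq_bot] at hker
  · rw [← LinearMap.range_eq_top, eq_top_iff, ← h]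
    refine iSup₂_le fun μ hμ x hx ↦ ⟨μ⁻¹ • x, ?_⟩
    rw [map_smul, Module.End.mem_eigenspace_iff.1 hx, inv_smul_smul₀ hμ]

theorem lieSubalgebra_eq_top_of_forall_of_mem [CommRing K]
    (S : LieSubalgebra K (FreeLieAlgebra K X)) (h : ∀ x, FreeLieAlgebra.of K x ∈ S) : S = ⊤ := by
  let F : FreeLieAlgebra K X →ₗ⁅K⁆ S := FreeLieAlgebra.lift K fun x ↦ ⟨_, h x⟩
  have hF : S.incl.comp F = LieHom.id := FreeLieAlgebra.hom_ext fun x ↦ by simp [F]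
  refine eq_top_iff.2 fun l _ ↦ ?_
  have hl : (F l : FreeLieAlgebra K X) = l := DFunLike.congr_fun hF l
  exact hl ▸ (F l).2

/-- Brackets of eigenvectors are eigenvectors and eigenvalues add up, so a derivation fixing the
generators is diagonalisable with positive integer eigenvalues. -/
theorem lieDerivation_bijective [Field K] [CharZero K]
    (E : LieDerivation K (FreeLieAlgebra K X) (FreeLieAlgebra K X))
    (hE : ∀ x, E (FreeLieAlgebra.of K x) = FreeLieAlgebra.of K x) : Function.Bijective E := by
  let eigenvectors : Set (FreeLieAlgebra K X) := {l | ∃ n : ℕ, E l = ((n : K) + 1) • l}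
  have lie_mem : ∀ l ∈ Submodule.span K eigenvectors, ∀ m ∈ Submodule.span K eigenvectors,
      ⁅l, m⁆ ∈ Submodule.span K eigenvectors := by
    intro l hl m hm
    induction hl, hm using Submodule.span_induction₂ with
    | mem_mem l m hl hm =>
      obtain ⟨n, hn⟩ := hl
      obtain ⟨k, hk⟩ := hm
      refine Submodule.subset_span ⟨n + k + 1, ?_⟩
      rw [LieDerivation.apply_lie_eq_add, hn, hk, lie_smul, smul_lie, ← add_smul]
      congr 1
      push_cast
      ring
    | zero_left => simp
    | zero_right => simp
    | add_left _ _ _ _ _ _ h₁ h₂ => rw [add_lie]; exact add_mem h₁ h₂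
    | add_right _ _ _ _ _ _ h₁ h₂ => rw [lie_add]; exact add_mem h₁ h₂
    | smul_left c _ _ _ _ h => rw [smul_lie]; exact Submodule.smul_mem _ c h
    | smul_right c _ _ _ _ h => rw [lie_smul]; exact Submodule.smul_mem _ c h
  have span_eq_top : Submodule.span K eigenvectors = ⊤ := by
    have h := lieSubalgebra_eq_top_of_forall_of_mem
      { Submodule.span K eigenvectors with lie_mem' := fun {l m} hl hm ↦ lie_mem l hl m hm }
      fun x ↦ Submodule.subset_span ⟨0, by simp [hE]⟩
    exact congrArg LieSubalgebra.toSubmodule h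
  refine bijective_of_iSup_eigenspace_eq_top (E := (E : Module.End K (FreeLieAlgebra K X))) ?_
  refine eq_top_iff.2 (span_eq_top ▸ Submodule.span_le.2 ?_)
  rintro l ⟨n, hn⟩
  exact Submodule.mem_iSup_of_mem _ (Submodule.mem_iSup_of_mem (Nat.cast_add_one_ne_zero n)
    (Module.End.mem_eigenspace_iff.2 hn))

section Dynkin

variable (R X : Type*) [CommRing R]

/-- The canonical Lie morphism from the free Lie algebra to the free associative algebra. -/
noncomputable def freeLieToFreeAlgebra : FreeLieAlgebra R X →ₗ⁅R⁆ FreeAlgebra R X :=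
  FreeLieAlgebra.lift R (FreeAlgebra.ι R)

/-- The extension to the free associative algebra of the adjoint action of the free Lie algebra. -/
noncomputable def freeAdjoint : FreeAlgebra R X →ₐ[R] Module.End R (FreeLieAlgebra R X) :=
  FreeAlgebra.lift R fun x ↦ LieAlgebra.ad R _ (FreeLieAlgebra.of R x)

/-- The action of the free associative algebra on `L × R`, with `L` the free Lie algebra, in which
a generator `x` sends `(l, c)` to `(⁅x, l⁆ + c x, 0)`. It encodes the recursive definition of
right-normed brackets. -/
noncomputable def dynkinAction : FreeAlgebra R X →ₐ[R] Module.End R (FreeLieAlgebra R X × R) :=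
  FreeAlgebra.lift R fun x ↦ LinearMap.prod
    ((LieAlgebra.ad R _ (FreeLieAlgebra.of R x)).comp (LinearMap.fst R _ R) +
      (LinearMap.toSpanSingleton R _ (FreeLieAlgebra.of R x)).comp (LinearMap.snd R _ R)) 0

/-- The Dynkin operator, sending a word `x₁ ⋯ xₙ` to the right-normed bracket
`⁅x₁, ⁅x₂, …, xₙ⁆⁆` and the empty word to `0`. -/
noncomputable def dynkin : FreeAlgebra R X →ₗ[R] FreeLieAlgebra R X :=
  (LinearMap.fst R _ R).comp
    ((LinearMap.applyₗ ((0 : FreeLieAlgebra R X), (1 : R))).comp (dynkinAction R X).toLinearMap)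

/-- The coproduct of the free associative algebra for which the generators are primitive. -/
noncomputable def freeCoproduct : FreeAlgebra R X →ₐ[R] FreeAlgebra R X ⊗[R] FreeAlgebra R X :=
  FreeAlgebra.lift R fun x ↦ FreeAlgebra.ι R x ⊗ₜ 1 + 1 ⊗ₜ FreeAlgebra.ι R x

variable {R X}

@[simp]
theorem freeLieToFreeAlgebra_of (x : X) :
    freeLieToFreeAlgebra R X (FreeLieAlgebra.of R x) = FreeAlgebra.ι R x :=
  FreeLieAlgebra.lift_of_apply ..

@[simp]
theorem freeAdjoint_ι (x : X) :
    freeAdjoint R X (FreeAlgebra.ι R x) = LieAlgebra.ad R _ (FreeLieAlgebra.of R x) :=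
  FreeAlgebra.lift_ι_apply ..

@[simp]
theorem freeCoproduct_ι (x : X) :
    freeCoproduct R X (FreeAlgebra.ι R x) = FreeAlgebra.ι R x ⊗ₜ 1 + 1 ⊗ₜ FreeAlgebra.ι R x :=
  FreeAlgebra.lift_ι_apply ..

theorem dynkinAction_apply (a : FreeAlgebra R X) (l : FreeLieAlgebra R X) (c : R) :
    dynkinAction R X a (l, c) =
      (freeAdjoint R X a l + c • dynkin R X a, FreeAlgebra.algebraMapInv a * c) := by
  have dynkin_def (a : FreeAlgebra R X) : dynkin R X a = (dynkinAction R X a (0, 1)).1 := rfl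
  induction a generalizing l c with
  | grade0 r => simp [dynkin_def, Algebra.algebraMap_eq_smul_one, FreeAlgebra.algebraMapInv]
  | grade1 x => simp [dynkin_def, dynkinAction, FreeAlgebra.algebraMapInv]
  | mul a b ha hb =>
    have hab : dynkin R X (a * b) =
        freeAdjoint R X a (dynkin R X b) + FreeAlgebra.algebraMapInv b • dynkin R X a := by
      rw [dynkin_def, map_mul, Module.End.mul_apply, hb, ha]
      simp
    rw [map_mul, Module.End.mul_apply, hb, ha, hab]
    simp only [map_mul, Module.End.mul_apply, map_add, map_smul, Prod.mk.injEq]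
    exact ⟨by module, by ring⟩
  | add a b ha hb =>
    rw [map_add, LinearMap.add_apply, ha, hb]
    simp only [map_add, LinearMap.add_apply, Prod.mk_add_mk, Prod.mk.injEq]
    exact ⟨by module, by ring⟩

@[simp]
theorem dynkin_one : dynkin R X 1 = 0 := by
  simp [dynkin]

@[simp]
theorem dynkin_ι (x : X) : dynkin R X (FreeAlgebra.ι R x) = FreeLieAlgebra.of R x := by
  simp [dynkin, dynkinAction]

theorem dynkin_mul (a b : FreeAlgebra R X) :
    dynkin R X (a * b) =
      freeAdjoint R X a (dynkin R X b) + FreeAlgebra.algebraMapInv b • dynkin R X a := by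
  change (dynkinAction R X (a * b) (0, 1)).1 = _
  rw [map_mul, Module.End.mul_apply, dynkinAction_apply b, dynkinAction_apply a]
  simp

theorem freeAdjoint_freeLieToFreeAlgebra (l : FreeLieAlgebra R X) :
    freeAdjoint R X (freeLieToFreeAlgebra R X l) = LieAlgebra.ad R _ l := by
  have h : ((freeAdjoint R X : FreeAlgebra R X →ₗ⁅R⁆ _).comp (freeLieToFreeAlgebra R X)) =
      LieAlgebra.ad R (FreeLieAlgebra R X) :=
    FreeLieAlgebra.hom_ext fun x ↦ by simp
  exact DFunLike.congr_fun h l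

theorem algebraMapInv_freeLieToFreeAlgebra (l : FreeLieAlgebra R X) :
    FreeAlgebra.algebraMapInv (freeLieToFreeAlgebra R X l) = 0 := by
  have h : ((FreeAlgebra.algebraMapInv : FreeAlgebra R X →ₐ[R] R) :
      FreeAlgebra R X →ₗ⁅R⁆ R).comp (freeLieToFreeAlgebra R X) = 0 :=
    FreeLieAlgebra.hom_ext fun x ↦ by simp [FreeAlgebra.algebraMapInv]
  exact DFunLike.congr_fun h l

/-- The Dynkin operator restricted to Lie elements; it multiplies a bracket of `n` generators
by `n`. -/
noncomputable def dynkinDerivation :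
    LieDerivation R (FreeLieAlgebra R X) (FreeLieAlgebra R X) where
  toLinearMap := (dynkin R X).comp (freeLieToFreeAlgebra R X : _ →ₗ[R] _)
  leibniz' l m := by
    simp only [LinearMap.comp_apply, LieHom.coe_toLinearMap, LieHom.map_lie,
      LieRing.of_associative_ring_bracket, map_sub, dynkin_mul, freeAdjoint_freeLieToFreeAlgebra,
      algebraMapInv_freeLieToFreeAlgebra, zero_smul, add_zero, LieAlgebra.ad_apply]

theorem dynkinDerivation_apply (l : FreeLieAlgebra R X) :
    dynkinDerivation l = dynkin R X (freeLieToFreeAlgebra R X l) :=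
  rfl

theorem freeLieToFreeAlgebra_mem_primitive (l : FreeLieAlgebra R X) :
    freeLieToFreeAlgebra R X l ∈ primitiveSubalgebra (freeCoproduct R X) := by
  have h := lieSubalgebra_eq_top_of_forall_of_mem
    ((primitiveSubalgebra (freeCoproduct R X)).comap (freeLieToFreeAlgebra R X)) fun x ↦ by
      simp [mem_primitiveSubalgebra]
  have hl : l ∈ (⊤ : LieSubalgebra R (FreeLieAlgebra R X)) := LieSubalgebra.mem_top l
  rwa [← h] at hl

theorem counit_tmul_id_freeCoproduct (a : FreeAlgebra R X) :
    Algebra.TensorProduct.lid R (FreeAlgebra R X) (Algebra.TensorProduct.map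
      FreeAlgebra.algebraMapInv (AlgHom.id R _) (freeCoproduct R X a)) = a := by
  have h : ((Algebra.TensorProduct.lid R (FreeAlgebra R X)).toAlgHom.comp
      (Algebra.TensorProduct.map FreeAlgebra.algebraMapInv (AlgHom.id R _))).comp
        (freeCoproduct R X) = AlgHom.id R _ := by
    ext x
    simp [FreeAlgebra.algebraMapInv]
  exact DFunLike.congr_fun h a

theorem algebraMapInv_eq_zero_of_primitive {a : FreeAlgebra R X}
    (ha : a ∈ primitiveSubalgebra (freeCoproduct R X)) : FreeAlgebra.algebraMapInv a = 0 := by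
  have h := counit_tmul_id_freeCoproduct a
  rw [mem_primitiveSubalgebra.1 ha] at h
  simpa using congrArg (FreeAlgebra.algebraMapInv (R := R)) h

variable (R X) in
/-- The linear map `a ⊗ b ↦ D(a) b`, where `D` is the Dynkin operator. -/
noncomputable def dynkinMul : FreeAlgebra R X ⊗[R] FreeAlgebra R X →ₗ[R] FreeAlgebra R X :=
  (LinearMap.mul' R (FreeAlgebra R X)).comp
    (TensorProduct.map ((freeLieToFreeAlgebra R X : _ →ₗ[R] _).comp (dynkin R X)) LinearMap.id)

@[simp]
theorem dynkinMul_tmul (a b : FreeAlgebra R X) :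
    dynkinMul R X (a ⊗ₜ b) = freeLieToFreeAlgebra R X (dynkin R X a) * b :=
  rfl

theorem dynkinMul_freeCoproduct_ι_mul (x : X) (t : FreeAlgebra R X ⊗[R] FreeAlgebra R X) :
    dynkinMul R X (freeCoproduct R X (FreeAlgebra.ι R x) * t) =
      FreeAlgebra.ι R x * dynkinMul R X t + FreeAlgebra.ι R x *
        Algebra.TensorProduct.lid R (FreeAlgebra R X) (Algebra.TensorProduct.map
          FreeAlgebra.algebraMapInv (AlgHom.id R _) t) := by
  induction t with
  | zero => simp
  | add s t hs ht => rw [mul_add, map_add, hs, ht]; simp only [map_add, mul_add]; abel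
  | tmul a b =>
    simp only [freeCoproduct_ι, add_mul, Algebra.TensorProduct.tmul_mul_tmul, one_mul, map_add,
      dynkinMul_tmul, dynkin_mul, freeAdjoint_ι, LieAlgebra.ad_apply, dynkin_ι, map_smul,
      LieHom.map_lie, freeLieToFreeAlgebra_of, LieRing.of_associative_ring_bracket,
      Algebra.TensorProduct.map_tmul, AlgHom.id_apply, Algebra.TensorProduct.lid_tmul,
      sub_mul, smul_mul_assoc, mul_smul_comm, mul_assoc]
    abel

variable (R X) in
/-- The convolution of the Dynkin operator with the identity, which multiplies a word by its
length. -/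
noncomputable def wordDegree : Module.End R (FreeAlgebra R X) :=
  (dynkinMul R X).comp (freeCoproduct R X).toLinearMap

theorem wordDegree_one : wordDegree R X 1 = 0 := by
  simp [wordDegree, Algebra.TensorProduct.one_def]

theorem wordDegree_ι_mul (x : X) (a : FreeAlgebra R X) :
    wordDegree R X (FreeAlgebra.ι R x * a) =
      FreeAlgebra.ι R x * wordDegree R X a + FreeAlgebra.ι R x * a := by
  change dynkinMul R X (freeCoproduct R X _) = _ * dynkinMul R X (freeCoproduct R X _) + _
  rw [map_mul, dynkinMul_freeCoproduct_ι_mul, counit_tmul_id_freeCoproduct]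

theorem wordDegree_eq_dynkin_of_primitive {a : FreeAlgebra R X}
    (ha : a ∈ primitiveSubalgebra (freeCoproduct R X)) :
    wordDegree R X a = freeLieToFreeAlgebra R X (dynkin R X a) := by
  change dynkinMul R X (freeCoproduct R X a) = _
  rw [mem_primitiveSubalgebra.1 ha]
  simp

theorem basisFreeMonoid_apply (w : FreeMonoid X) :
    FreeAlgebra.basisFreeMonoid R X w = FreeMonoid.lift (FreeAlgebra.ι R) w := by
  simp [FreeAlgebra.basisFreeMonoid, FreeAlgebra.equivMonoidAlgebraFreeMonoid]

theorem wordDegree_basisFreeMonoid (w : FreeMonoid X) :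
    wordDegree R X (FreeAlgebra.basisFreeMonoid R X w) =
      (w.length : R) • FreeAlgebra.basisFreeMonoid R X w := by
  simp only [basisFreeMonoid_apply]
  induction w using FreeMonoid.inductionOn' with
  | one => simp [wordDegree_one]
  | of_mul x w ih =>
    rw [map_mul, FreeMonoid.lift_eval_of, wordDegree_ι_mul, ih, FreeMonoid.length_mul,
      FreeMonoid.length_of, mul_smul_comm]
    push_cast
    module

end Dynkin

variable [Field K] [CharZero K]

theorem dynkinDerivation_bijective :
    Function.Bijective (dynkinDerivation : LieDerivation K (FreeLieAlgebra K X) _) :=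
  lieDerivation_bijective _ fun x ↦ by
    rw [dynkinDerivation_apply, freeLieToFreeAlgebra_of, dynkin_ι]

theorem freeLieToFreeAlgebra_injective : Function.Injective (freeLieToFreeAlgebra K X) :=
  Function.Injective.of_comp (f := dynkin K X) dynkinDerivation_bijective.1

theorem eq_algebraMap_of_wordDegree_eq_zero {a : FreeAlgebra K X} (ha : wordDegree K X a = 0) :
    a = algebraMap K _ (FreeAlgebra.algebraMapInv a) := by
  let b := FreeAlgebra.basisFreeMonoid K X
  have repr_eq_zero (w : FreeMonoid X) (hw : w ≠ 1) : b.repr a w = 0 := by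
    have h : b.coord w ∘ₗ wordDegree K X = (w.length : K) • b.coord w := b.ext fun v ↦ by
      rcases eq_or_ne v w with rfl | hvw <;> simp [b, wordDegree_basisFreeMonoid, *]
    have h : (w.length : K) * b.repr a w = 0 := by
      simpa [ha] using (LinearMap.congr_fun h a).symm
    exact (mul_eq_zero.1 h).resolve_left (by simpa using hw)
  have h : a = algebraMap K _ (b.repr a 1) := by
    conv_lhs => rw [← b.linearCombination_repr a, Finsupp.linearCombination_apply,
      Finsupp.sum_of_support_subset (s := {1}) _ (fun w hw ↦ by
        by_contra h
        exact Finsupp.mem_support_iff.1 hw (repr_eq_zero w (by simpa using h))) _ (by simp)]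
    simp [b, basisFreeMonoid_apply, Algebra.algebraMap_eq_smul_one]
  rw [h, FreeAlgebra.algebraMap_leftInverse]

/-- **Friedrichs' theorem**. If `a` is primitive, its degree `deg a` is the image of the Lie
element `D a`; as `D` is bijective on Lie elements, some Lie element has the same degree, and hence
differs from `a` by a scalar, which must vanish. -/
theorem range_freeLieToFreeAlgebra :
    Set.range (freeLieToFreeAlgebra K X) = primitiveSubalgebra (freeCoproduct K X) := by
  refine subset_antisymm (Set.range_subset_iff.2 freeLieToFreeAlgebra_mem_primitive)
    fun a (ha : a ∈ primitiveSubalgebra _) ↦ ?_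
  obtain ⟨l, hl⟩ := dynkinDerivation_bijective.2 (dynkin K X a)
  have hprim := freeLieToFreeAlgebra_mem_primitive l
  have hdeg : wordDegree K X (a - freeLieToFreeAlgebra K X l) = 0 := by
    rw [map_sub, wordDegree_eq_dynkin_of_primitive ha, wordDegree_eq_dynkin_of_primitive hprim,
      ← hl, dynkinDerivation_apply, sub_self]
  refine ⟨l, (sub_eq_zero.1 ?_).symm⟩
  rw [eq_algebraMap_of_wordDegree_eq_zero hdeg,
    algebraMapInv_eq_zero_of_primitive (sub_mem ha hprim), map_zero]

end Friedrichs

/-! ### Levi's lemma and unitriangular maps -/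

section Levi

/-- A monoid is equidivisible if any two factorisations `a * b = c * d` of an element have a
common refinement. -/
def Equidivisible (M : Type*) [Monoid M] : Prop :=
  ∀ a b c d : M, a * b = c * d →
    (∃ m, c = a * m ∧ b = m * d) ∨ (∃ m, a = c * m ∧ d = m * b)

variable {M ι : Type*} [Monoid M] {deg : M → ℕ} {g : ι → M}

theorem isUnit_iff_eq_one_of_deg (deg_mul : ∀ a b, deg (a * b) = deg a + deg b)
    (deg_eq_zero : ∀ a, deg a = 0 → a = 1) {a : M} : IsUnit a ↔ a = 1 := by
  refine ⟨fun h ↦ deg_eq_zero a ?_, fun h ↦ h ▸ isUnit_one⟩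
  obtain ⟨b, hab⟩ := h.exists_right_inv
  have hone := deg_mul 1 1
  have hmul := deg_mul a b
  rw [hab] at hmul
  rw [mul_one] at hone
  omega

theorem freeMonoid_lift_injective (h : Equidivisible M)
    (deg_mul : ∀ a b, deg (a * b) = deg a + deg b) (deg_eq_zero : ∀ a, deg a = 0 → a = 1)
    (hg : Function.Injective g) (hirr : ∀ i, Irreducible (g i)) :
    Function.Injective (FreeMonoid.lift g) := by
  have isUnit_iff {a : M} : IsUnit a ↔ a = 1 := isUnit_iff_eq_one_of_deg deg_mul deg_eq_zero
  have ne_one (i : ι) (b : M) : g i * b ≠ 1 := by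
    intro hb
    have hdeg := deg_mul (g i) b
    have hone := deg_mul 1 1
    rw [hb] at hdeg
    rw [mul_one] at hone
    exact (hirr i).not_isUnit (isUnit_iff.2 (deg_eq_zero _ (by omega)))
  have peel {i j : ι} {v w : FreeMonoid ι} {m : M} (hm : g j = g i * m)
      (hv : FreeMonoid.lift g v = m * FreeMonoid.lift g w) :
      i = j ∧ FreeMonoid.lift g v = FreeMonoid.lift g w := by
    have hm_one : m = 1 :=
      isUnit_iff.1 (((hirr j).isUnit_or_isUnit hm).resolve_left (hirr i).not_isUnit)
    rw [hm_one, mul_one] at hm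
    rw [hm_one, one_mul] at hv
    exact ⟨(hg hm).symm, hv⟩
  intro v w hvw
  induction v using FreeMonoid.inductionOn' generalizing w with
  | one =>
    cases w using FreeMonoid.casesOn with
    | one => rfl
    | of_mul j w => exact absurd (by simpa using hvw.symm) (ne_one j _)
  | of_mul i v ih =>
    cases w using FreeMonoid.casesOn with
    | one => exact absurd (by simpa using hvw) (ne_one i _)
    | of_mul j w =>
      simp only [map_mul, FreeMonoid.lift_eval_of] at hvw
      obtain ⟨m, hm, hv⟩ | ⟨m, hm, hw⟩ := h _ _ _ _ hvw
      · obtain ⟨rfl, heq⟩ := peel hm hv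
        rw [ih heq]
      · obtain ⟨rfl, heq⟩ := peel hm hw
        rw [ih heq.symm]

theorem freeMonoid_lift_surjective (deg_mul : ∀ a b, deg (a * b) = deg a + deg b)
    (deg_eq_zero : ∀ a, deg a = 0 → a = 1) (hg : ∀ a, Irreducible a → a ∈ Set.range g) :
    Function.Surjective (FreeMonoid.lift g) := by
  have isUnit_iff {a : M} : IsUnit a ↔ a = 1 := isUnit_iff_eq_one_of_deg deg_mul deg_eq_zero
  intro a
  induction hn : deg a using Nat.strong_induction_on generalizing a with
  | _ n ih =>
    by_cases hone : a = 1
    · exact ⟨1, by rw [map_one, hone]⟩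
    by_cases hirr : Irreducible a
    · obtain ⟨i, rfl⟩ := hg a hirr
      exact ⟨FreeMonoid.of i, FreeMonoid.lift_eval_of ..⟩
    simp only [irreducible_iff, isUnit_iff, hone, not_false_eq_true, true_and, not_forall,
      not_or] at hirr
    obtain ⟨b, c, rfl, hb, hc⟩ := hirr
    have hdeg := deg_mul b c
    have hb' := mt (deg_eq_zero b) hb
    have hc' := mt (deg_eq_zero c) hc
    obtain ⟨v, rfl⟩ := ih _ (by omega) b rfl
    obtain ⟨w, rfl⟩ := ih _ (by omega) c rfl
    exact ⟨v * w, map_mul ..⟩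

/-- **Levi's lemma**: a graded equidivisible monoid is free on its irreducible elements. -/
theorem freeMonoid_lift_bijective (h : Equidivisible M)
    (deg_mul : ∀ a b, deg (a * b) = deg a + deg b) (deg_eq_zero : ∀ a, deg a = 0 → a = 1)
    (hg : Function.Injective g) (hrange : Set.range g = {a | Irreducible a}) :
    Function.Bijective (FreeMonoid.lift g) :=
  ⟨freeMonoid_lift_injective h deg_mul deg_eq_zero hg fun i ↦ hrange.subset ⟨i, rfl⟩,
    freeMonoid_lift_surjective deg_mul deg_eq_zero fun _ ha ↦ hrange.superset ha⟩

end Levi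

section Unitriangular

variable {R V W ι α : Type*} [Ring R] [AddCommGroup V] [Module R V] [AddCommGroup W] [Module R W]
  [LinearOrder α] {b : Module.Basis ι R V} {c : Module.Basis ι R W} {ρ : ι → α} {T : V →ₗ[R] W}

theorem injective_of_unitriangular
    (hT : ∀ i, T (b i) - c i ∈ Submodule.span R (c '' {j | ρ j < ρ i})) :
    Function.Injective T := by
  have coord_image (i j : ι) (hij : ρ j ≤ ρ i) : c.repr (T (b j)) i = c.repr (c j) i := by
    have h := (Module.Basis.mem_span_image c).1 (hT j)
    rw [← sub_eq_zero, ← Finsupp.sub_apply, ← map_sub]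
    by_contra hne
    exact (h (Finsupp.mem_support_iff.2 hne)).not_ge hij
  refine (injective_iff_map_eq_zero T).2 fun x hx ↦ ?_
  by_contra hne
  have hsupp : (b.repr x).support.Nonempty := by simpa using hne
  obtain ⟨i, hi, hmax⟩ := Finset.exists_max_image _ ρ hsupp
  have coord_eq : c.repr (T x) i = b.repr x i := by
    conv_lhs => rw [← b.linearCombination_repr x, Finsupp.linearCombination_apply, Finsupp.sum]
    simp only [map_sum, map_smul, Finsupp.finsetSum_apply, Finsupp.smul_apply]
    rw [Finset.sum_congr rfl fun j hj ↦ by rw [coord_image i j (hmax j hj)]]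
    classical simp +contextual [Finsupp.single_apply, eq_comm]
  exact Finsupp.mem_support_iff.1 hi (by rw [← coord_eq, hx, map_zero, Finsupp.zero_apply])

theorem surjective_of_unitriangular [WellFoundedLT α]
    (hT : ∀ i, T (b i) - c i ∈ Submodule.span R (c '' {j | ρ j < ρ i})) :
    Function.Surjective T := by
  have mem_range (i : ι) : c i ∈ T.range := by
    induction i using (InvImage.wf ρ wellFounded_lt).induction with
    | _ i ih =>
      have hspan : Submodule.span R (c '' {j | ρ j < ρ i}) ≤ T.range :=
        Submodule.span_le.2 (Set.image_subset_iff.2 fun j hj ↦ ih j hj)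
      simpa using sub_mem (T.mem_range_self (b i)) (hspan (hT i))
  rw [← LinearMap.range_eq_top, eq_top_iff, ← c.span_eq]
  exact Submodule.span_le.2 (Set.range_subset_iff.2 mem_range)

theorem bijective_of_unitriangular [WellFoundedLT α]
    (hT : ∀ i, T (b i) - c i ∈ Submodule.span R (c '' {j | ρ j < ρ i})) :
    Function.Bijective T :=
  ⟨injective_of_unitriangular hT, surjective_of_unitriangular hT⟩

end Unitriangular

/-! ### Primitive elements from comultiplicative families -/

section PrimitivePart

variable {R A α : Type*} [CommRing R] [Ring A] [Algebra R A] [DecidableEq α]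

/-- A family `F` of elements of an algebra, indexed by finite sets, whose coproduct is the
unshuffling along the members of a family `S` of finite sets closed under union and
difference. -/
structure IsComultiplicative (Δ : A →ₐ[R] A ⊗[R] A) (S : Finset (Finset α))
    (F : Finset α → A) : Prop where
  map_empty : F ∅ = 1
  sdiff_mem : ∀ I ∈ S, ∀ J ∈ S, I \ J ∈ S
  union_mem : ∀ I ∈ S, ∀ J ∈ S, I ∪ J ∈ S
  comul : ∀ I ∈ S, Δ (F I) = ∑ J ∈ S with J ⊆ I, F J ⊗ₜ F (I \ J)

/-- The elements `P I` determined, for `m ∈ I ∈ S`, by `∑ B ⊆ I, m ∈ B, P B * F (I \ B) = F I`;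
they are primitive when `F` is comultiplicative. -/
def primitivePart (S : Finset (Finset α)) (F : Finset α → A) (m : α) (I : Finset α) : A :=
  F I - ∑ B ∈ (S.filter fun B ↦ B ⊂ I ∧ m ∈ B).attach, primitivePart S F m B.1 * F (I \ B.1)
termination_by I.card
decreasing_by exact Finset.card_lt_card (Finset.mem_filter.1 B.2).2.1

theorem primitivePart_eq (S : Finset (Finset α)) (F : Finset α → A) (m : α) (I : Finset α) :
    primitivePart S F m I =
      F I - ∑ B ∈ S with B ⊂ I ∧ m ∈ B, primitivePart S F m B * F (I \ B) := by
  rw [primitivePart]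
  congr 1
  exact Finset.sum_attach _ fun B ↦ primitivePart S F m B * F (I \ B)

variable {Δ : A →ₐ[R] A ⊗[R] A} {S : Finset (Finset α)} {F : Finset α → A} {m : α} {I : Finset α}

theorem sum_filter_subset_and_mem {M : Type*} [AddCommMonoid M] (f : Finset α → M) (hI : I ∈ S)
    (hm : m ∈ I) :
    ∑ B ∈ S with B ⊆ I ∧ m ∈ B, f B = f I + ∑ B ∈ S with B ⊂ I ∧ m ∈ B, f B := by
  have hinsert : (S.filter fun B ↦ B ⊆ I ∧ m ∈ B) =
      insert I (S.filter fun B ↦ B ⊂ I ∧ m ∈ B) := by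
    ext B
    simp only [Finset.mem_filter, Finset.mem_insert, le_iff_lt_or_eq (a := B)]
    grind
  rw [hinsert, Finset.sum_insert (by simp)]

theorem sum_primitivePart_mul (hF : F ∅ = 1) (hI : I ∈ S) (hm : m ∈ I) :
    ∑ B ∈ S with B ⊆ I ∧ m ∈ B, primitivePart S F m B * F (I \ B) = F I := by
  rw [sum_filter_subset_and_mem _ hI hm, Finset.sdiff_self, hF, mul_one, primitivePart_eq,
    sub_add_cancel]

namespace IsComultiplicative

theorem sum_primitivePart_tmul_one_mul (h : IsComultiplicative Δ S F) (hI : I ∈ S) :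
    ∑ B ∈ S with B ⊆ I ∧ m ∈ B, (primitivePart S F m B ⊗ₜ[R] (1 : A)) * Δ (F (I \ B)) =
      ∑ J ∈ S with J ⊆ I ∧ m ∈ J, F J ⊗ₜ F (I \ J) := by
  have expand_left (B) (hB : B ∈ S.filter fun B ↦ B ⊆ I ∧ m ∈ B) :
      (primitivePart S F m B ⊗ₜ[R] (1 : A)) * Δ (F (I \ B)) =
        ∑ K ∈ S with K ⊆ I \ B, (primitivePart S F m B * F K) ⊗ₜ F ((I \ B) \ K) := by
    rw [h.comul _ (h.sdiff_mem I hI B (Finset.mem_filter.1 hB).1), Finset.mul_sum]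
    simp only [Algebra.TensorProduct.tmul_mul_tmul, one_mul]
  have expand_right (J) (hJ : J ∈ S.filter fun J ↦ J ⊆ I ∧ m ∈ J) :
      F J ⊗ₜ[R] F (I \ J) = ∑ B ∈ S with B ⊆ J ∧ m ∈ B,
        (primitivePart S F m B * F (J \ B)) ⊗ₜ F (I \ J) := by
    obtain ⟨hJS, -, hmJ⟩ := Finset.mem_filter.1 hJ
    rw [← TensorProduct.sum_tmul, sum_primitivePart_mul h.map_empty hJS hmJ]
  have union_sdiff_self {B K : Finset α} (hK : K ⊆ I \ B) : (B ∪ K) \ B = K :=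
    Finset.union_sdiff_cancel_left (Finset.disjoint_of_subset_left hK Finset.sdiff_disjoint).symm
  rw [Finset.sum_congr rfl expand_left, Finset.sum_congr rfl expand_right, Finset.sum_sigma',
    Finset.sum_sigma']
  refine Finset.sum_bij' (fun x _ ↦ ⟨x.1 ∪ x.2, x.1⟩) (fun x _ ↦ ⟨x.2, x.1 \ x.2⟩) ?_ ?_ ?_ ?_ ?_
    <;> rintro ⟨X, Y⟩ hXY <;> simp only [Finset.mem_sigma, Finset.mem_filter] at hXY ⊢ <;>
    obtain ⟨⟨hXS, hXI, hX⟩, hYS, hY⟩ := hXY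
  · exact ⟨⟨h.union_mem _ hXS _ hYS, Finset.union_subset hXI (hY.trans Finset.sdiff_subset),
      Finset.mem_union_left _ hX⟩, hXS, Finset.subset_union_left, hX⟩
  · exact ⟨⟨hYS, hY.1.trans hXI, hY.2⟩, h.sdiff_mem _ hXS _ hYS,
      Finset.sdiff_subset_sdiff hXI subset_rfl⟩
  · rw [union_sdiff_self hY]
  · rw [Finset.union_sdiff_of_subset hY.1]
  · rw [union_sdiff_self hY, sdiff_sdiff_left', Finset.sdiff_union_distrib, Finset.inf_eq_inter]

theorem sum_one_tmul_primitivePart_mul (h : IsComultiplicative Δ S F) (hI : I ∈ S) (hm : m ∈ I) :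
    ∑ B ∈ S with B ⊆ I ∧ m ∈ B, ((1 : A) ⊗ₜ[R] primitivePart S F m B) * Δ (F (I \ B)) =
      ∑ J ∈ S with J ⊆ I ∧ m ∉ J, F J ⊗ₜ F (I \ J) := by
  have expand_left (B) (hB : B ∈ S.filter fun B ↦ B ⊆ I ∧ m ∈ B) :
      ((1 : A) ⊗ₜ[R] primitivePart S F m B) * Δ (F (I \ B)) =
        ∑ J ∈ S with J ⊆ I \ B, F J ⊗ₜ (primitivePart S F m B * F ((I \ J) \ B)) := by
    rw [h.comul _ (h.sdiff_mem I hI B (Finset.mem_filter.1 hB).1), Finset.mul_sum]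
    simp only [Algebra.TensorProduct.tmul_mul_tmul, one_mul, sdiff_right_comm]
  have expand_right (J) (hJ : J ∈ S.filter fun J ↦ J ⊆ I ∧ m ∉ J) :
      F J ⊗ₜ[R] F (I \ J) = ∑ B ∈ S with B ⊆ I \ J ∧ m ∈ B,
        F J ⊗ₜ (primitivePart S F m B * F ((I \ J) \ B)) := by
    obtain ⟨hJS, -, hmJ⟩ := Finset.mem_filter.1 hJ
    rw [← TensorProduct.tmul_sum, sum_primitivePart_mul h.map_empty (h.sdiff_mem I hI J hJS)
      (Finset.mem_sdiff.2 ⟨hm, hmJ⟩)]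
  rw [Finset.sum_congr rfl expand_left, Finset.sum_congr rfl expand_right]
  refine Finset.sum_comm' fun B J ↦ ?_
  simp only [Finset.mem_filter, Finset.subset_sdiff, disjoint_comm (a := J)]
  have not_mem (hBJ : Disjoint B J) (hmB : m ∈ B) : m ∉ J := Finset.disjoint_left.1 hBJ hmB
  tauto

theorem sum_mul_comul (h : IsComultiplicative Δ S F) (hI : I ∈ S) (hm : m ∈ I) :
    ∑ B ∈ S with B ⊆ I ∧ m ∈ B,
      (primitivePart S F m B ⊗ₜ[R] (1 : A) + (1 : A) ⊗ₜ[R] primitivePart S F m B) *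
        Δ (F (I \ B)) = Δ (F I) := by
  simp only [add_mul, Finset.sum_add_distrib]
  rw [h.sum_primitivePart_tmul_one_mul hI, h.sum_one_tmul_primitivePart_mul hI hm, h.comul I hI,
    ← Finset.filter_filter, ← Finset.filter_filter, Finset.sum_filter_add_sum_filter_not]

theorem primitivePart_mem_primitiveSubalgebra (h : IsComultiplicative Δ S F) (hI : I ∈ S)
    (hm : m ∈ I) : primitivePart S F m I ∈ primitiveSubalgebra Δ := by
  induction hn : I.card using Nat.strong_induction_on generalizing I with
  | _ n ih =>
    have htotal := h.sum_mul_comul hI hm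
    rw [sum_filter_subset_and_mem _ hI hm, Finset.sdiff_self, h.map_empty, map_one,
      mul_one] at htotal
    rw [mem_primitiveSubalgebra, eq_sub_of_add_eq htotal, primitivePart_eq, map_sub, map_sum]
    congr 1
    refine Finset.sum_congr rfl fun B hB ↦ ?_
    obtain ⟨hBS, hBI, hmB⟩ := Finset.mem_filter.1 hB
    rw [map_mul, mem_primitiveSubalgebra.1 (ih _ (hn ▸ Finset.card_lt_card hBI) hBS hmB rfl)]

end IsComultiplicative

end PrimitivePart

/-! ### Half-edges and vertices -/

section Monotone

theorem eqOn_of_strictMonoOn_of_image_eq {f g : ℕ → ℕ} {S : Finset ℕ} (hf : StrictMonoOn f S)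
    (hg : StrictMonoOn g S) (h : S.image f = S.image g) : Set.EqOn f g S := by
  have strictMono_domRestrict {f : ℕ → ℕ} (hf : StrictMonoOn f S) :
      StrictMono ((S : Set ℕ).domRestrict f) := fun a b hab ↦ hf a.2 b.2 hab
  have hrange : Set.range ((S : Set ℕ).domRestrict f) = Set.range ((S : Set ℕ).domRestrict g) := by
    rw [Set.range_domRestrict, Set.range_domRestrict]
    exact_mod_cast h
  exact Set.domRestrict_eq_domRestrict_iff.1
    ((strictMono_domRestrict hf).range_inj (strictMono_domRestrict hg) |>.1 hrange)

theorem eqOn_of_monotoneOn_of_card_fiber_eq {f g : ℕ → ℕ} {S : Finset ℕ} (hf : MonotoneOn f S)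
    (hg : MonotoneOn g S) (h : ∀ i, (S.filter (f · = i)).card = (S.filter (g · = i)).card) :
    Set.EqOn f g S := by
  have sorted_map {f : ℕ → ℕ} (hf : MonotoneOn f S) : ((S.sort).map f).SortedLE := by
    refine List.Pairwise.sortedLE (List.pairwise_map.2 ?_)
    exact (Finset.pairwise_sort S (· ≤ ·)).imp_of_mem fun ha hb hab ↦
      hf (by simpa using ha) (by simpa using hb) hab
  have count_map (f : ℕ → ℕ) (i : ℕ) : ((S.sort).map f).count i = (S.filter (f · = i)).card := by
    rw [← Multiset.coe_count, ← Multiset.map_coe, Finset.sort_eq, Multiset.count_map]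
    simp only [Finset.card_def, Finset.filter_val, eq_comm]
  have hperm : ((S.sort).map f).Perm ((S.sort).map g) :=
    List.perm_iff_count.2 fun i ↦ by rw [count_map, count_map, h]
  have hmap := hperm.eq_of_sortedLE (sorted_map hf) (sorted_map hg)
  exact fun a ha ↦ List.map_inj_left.1 hmap a ((Finset.mem_sort _).2 ha)

/-- The `k`-th smallest element of `S`, counted from `1`. -/
def nthElement (S : Finset ℕ) (k : ℕ) : ℕ := S.sort.getD (k - 1) 0

theorem nthElement_eq_getElem {S : Finset ℕ} {i : ℕ} (hi : i < S.sort.length) :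
    nthElement S (i + 1) = S.sort[i] := by
  rw [nthElement, Nat.add_sub_cancel, List.getD_eq_getElem]

theorem strictMonoOn_nthElement (S : Finset ℕ) :
    StrictMonoOn (nthElement S) (Finset.Icc 1 S.card) := by
  intro k hk l hl hkl
  rw [Finset.mem_coe, Finset.mem_Icc, ← Finset.length_sort (· ≤ ·)] at hk hl
  obtain ⟨i, rfl⟩ := Nat.exists_eq_add_of_le' hk.1
  obtain ⟨j, rfl⟩ := Nat.exists_eq_add_of_le' hl.1
  rw [nthElement_eq_getElem hk.2, nthElement_eq_getElem hl.2]
  exact List.pairwise_iff_getElem.1 (Finset.sortedLT_sort S).pairwise _ _ _ _ (by omega)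

theorem image_nthElement (S : Finset ℕ) : (Finset.Icc 1 S.card).image (nthElement S) = S := by
  refine Finset.eq_of_subset_of_card_le (fun a ha ↦ ?_) ?_
  · obtain ⟨k, hk, rfl⟩ := Finset.mem_image.1 ha
    rw [Finset.mem_Icc, ← Finset.length_sort (· ≤ ·)] at hk
    obtain ⟨i, rfl⟩ := Nat.exists_eq_add_of_le' hk.1
    rw [nthElement_eq_getElem hk.2]
    exact (Finset.mem_sort _).1 (List.getElem_mem _)
  · rw [Finset.card_image_of_injOn (strictMonoOn_nthElement S).injOn, Nat.card_Icc,
      Nat.add_sub_cancel]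

theorem nthElement_mem {S : Finset ℕ} {k : ℕ} (hk : k ∈ Finset.Icc 1 S.card) :
    nthElement S k ∈ S :=
  (image_nthElement S).subset (Finset.mem_image_of_mem _ hk)

theorem exists_nthElement_eq {S : Finset ℕ} {a : ℕ} (ha : a ∈ S) :
    ∃ k ∈ Finset.Icc 1 S.card, nthElement S k = a := by
  rwa [← image_nthElement S, Finset.mem_image] at ha

theorem card_filter_nthElement (S : Finset ℕ) (p : ℕ → Prop) [DecidablePred p] :
    ((Finset.Icc 1 S.card).filter (p <| nthElement S ·)).card = (S.filter p).card := by
  rw [← Finset.card_image_of_injOn ((strictMonoOn_nthElement S).injOn.mono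
    (Finset.coe_subset.2 (Finset.filter_subset _ _))), ← Finset.filter_image, image_nthElement]

theorem card_filter_le_nthElement {S : Finset ℕ} {k : ℕ} (hk : k ∈ Finset.Icc 1 S.card) :
    (S.filter (· ≤ nthElement S k)).card = k := by
  rw [← card_filter_nthElement]
  have hIcc : (Finset.Icc 1 S.card).filter (nthElement S · ≤ nthElement S k) = Finset.Icc 1 k := by
    ext l
    rw [Finset.mem_filter, and_congr_right fun hl ↦
      (strictMonoOn_nthElement S).le_iff_le (Finset.mem_coe.2 hl) (Finset.mem_coe.2 hk)]
    grind
  rw [hIcc, Nat.card_Icc, Nat.add_sub_cancel]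

theorem lt_countP_range_iff {p : ℕ → Bool} (hp : ∀ i j, i ≤ j → p j → p i) {n i : ℕ} :
    i < (List.range n).countP p ↔ i < n ∧ p i := by
  induction n with
  | zero => simp
  | succ n ih =>
    rw [List.range_succ, List.countP_append, List.countP_singleton]
    by_cases hn : p n
    · have hall : (List.range n).countP p = n := by
        simpa using List.countP_eq_length.2 fun j hj ↦ hp j n (List.mem_range.1 hj).le hn
      rw [if_pos hn, hall]
      exact ⟨fun hi ↦ ⟨hi, hp i n (by omega) hn⟩, And.left⟩
    · rw [if_neg hn, add_zero, ih]
      refine and_congr_left fun hi ↦ ⟨fun h ↦ by omega, fun h ↦ ?_⟩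
      exact lt_of_le_of_ne (Nat.le_of_lt_succ h) fun heq ↦ hn (heq ▸ hi)

end Monotone

namespace BD

section Vertices

variable (G : BD)

/-- The number `λ₁ + ⋯ + λᵢ` of half-edges at the first `i` vertices. -/
def prefixSum (i : ℕ) : ℕ := (G.lam.take i).sum

theorem prefixSum_mono : Monotone G.prefixSum := fun _ _ h ↦
  (List.take_sublist_take_left h).sum_le_sum (by simp)

theorem prefixSum_le_omega (i : ℕ) : G.prefixSum i ≤ G.omega :=
  (List.take_sublist _ _).sum_le_sum (by simp)

theorem prefixSum_succ (i : ℕ) : G.prefixSum (i + 1) = G.prefixSum i + G.lam.getD i 0 := by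
  obtain hi | hi := lt_or_ge i G.lam.length
  · rw [prefixSum, List.sum_take_succ _ _ hi, List.getD_eq_getElem _ _ hi, prefixSum]
  · rw [prefixSum, List.take_of_length_le (by omega), List.getD_eq_default _ _ hi, prefixSum,
      List.take_of_length_le hi, add_zero]

variable {G} {i k : ℕ}

theorem lt_v_iff : i < G.v k ↔ i < G.nv ∧ G.prefixSum i < k := by
  unfold v
  rw [lt_countP_range_iff, decide_eq_true_iff]
  · rfl
  · simp only [decide_eq_true_iff]
    exact fun i j hij hj ↦ (G.prefixSum_mono hij).trans_lt hj

theorem v_le_iff (hk : k ≤ G.omega) : G.v k ≤ i ↔ k ≤ G.prefixSum i := by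
  rw [← not_lt, lt_v_iff, not_and_or, not_lt, not_lt, or_iff_right_iff_imp]
  intro hi
  rwa [prefixSum, List.take_of_length_le hi]

theorem v_mono : Monotone G.v := by
  intro k l hkl
  by_contra! hlt
  obtain ⟨hnv, hprefix⟩ := lt_v_iff.1 hlt
  exact lt_irrefl _ (lt_v_iff.2 ⟨hnv, hprefix.trans_le hkl⟩)

theorem v_mem_Icc (hk : k ∈ Finset.Icc 1 G.omega) : G.v k ∈ Finset.Icc 1 G.nv := by
  obtain ⟨hpos, hle⟩ := Finset.mem_Icc.1 hk
  refine Finset.mem_Icc.2 ⟨?_, not_lt.1 fun h ↦ lt_irrefl _ (lt_v_iff.1 h).1⟩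
  rw [Nat.one_le_iff_ne_zero, Ne, ← Nat.le_zero, v_le_iff hle, prefixSum, List.take_zero,
    List.sum_nil]
  omega

theorem mem_HI {I : Finset ℕ} : k ∈ G.HI I ↔ k ∈ Finset.Icc 1 G.omega ∧ G.v k ∈ I :=
  Finset.mem_filter

theorem v_eq_succ_iff (hk : k ≤ G.omega) :
    G.v k = i + 1 ↔ k ∈ Finset.Ioc (G.prefixSum i) (G.prefixSum (i + 1)) := by
  rw [Finset.mem_Ioc, ← not_le, ← v_le_iff hk, ← v_le_iff hk]
  omega

theorem card_HI_singleton (G : BD) (i : ℕ) : (G.HI {i + 1}).card = G.lam.getD i 0 := by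
  have hIoc : G.HI {i + 1} = Finset.Ioc (G.prefixSum i) (G.prefixSum (i + 1)) := by
    ext k
    simp only [mem_HI, Finset.mem_Icc, Finset.mem_singleton]
    constructor
    · rintro ⟨⟨-, hk⟩, hv⟩
      exact (v_eq_succ_iff hk).1 hv
    · intro hk
      have hle := (Finset.mem_Ioc.1 hk).2.trans (G.prefixSum_le_omega _)
      exact ⟨⟨Nat.one_le_iff_ne_zero.2 (by grind), hle⟩, (v_eq_succ_iff hle).2 hk⟩
  rw [hIoc, Nat.card_Ioc, prefixSum_succ, Nat.add_sub_cancel_left]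

theorem card_HI (G : BD) (I : Finset ℕ) : (G.HI I).card = ∑ i ∈ I, (G.HI {i}).card := by
  rw [Finset.card_eq_sum_card_fiberwise fun k hk ↦ (mem_HI.1 hk).2]
  refine Finset.sum_congr rfl fun i hi ↦ congrArg _ ?_
  ext k
  simp only [Finset.mem_filter, mem_HI, Finset.mem_singleton]
  grind

end Vertices

/-! ### Embeddings of B-diagrams -/

section Embedding

/-- An isomorphism, given by increasing maps on half-edges and on vertices, of `D` onto the
sub-B-diagram of `G` on the image of `vertex`. Both maps are total functions on `ℕ`, of which only
the values on the half-edges and vertices of `D` matter. -/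
structure Embedding (D G : BD) where
  half : ℕ → ℕ
  vertex : ℕ → ℕ
  strictMonoOn_half : StrictMonoOn half (Finset.Icc 1 D.omega)
  strictMonoOn_vertex : StrictMonoOn vertex (Finset.Icc 1 D.nv)
  vertex_mem : ∀ i ∈ Finset.Icc 1 D.nv, vertex i ∈ Finset.Icc 1 G.nv
  image_half : (Finset.Icc 1 D.omega).image half = G.HI ((Finset.Icc 1 D.nv).image vertex)
  v_half : ∀ k ∈ Finset.Icc 1 D.omega, G.v (half k) = vertex (D.v k)
  mem_up : ∀ k, k ∈ D.up ↔ k ∈ Finset.Icc 1 D.omega ∧ half k ∈ G.up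
  mem_dn : ∀ k, k ∈ D.dn ↔ k ∈ Finset.Icc 1 D.omega ∧ half k ∈ G.dn
  mem_ed : ∀ p, p ∈ D.ed ↔
    p ∈ Finset.Icc 1 D.omega ×ˢ Finset.Icc 1 D.omega ∧ p.map half half ∈ G.ed

variable {C D D' G : BD} {I J : Finset ℕ}

theorem Valid.mem_Icc_of_mem_ed (hG : G.Valid) {p : ℕ × ℕ} (hp : p ∈ G.ed) :
    p ∈ Finset.Icc 1 G.omega ×ˢ Finset.Icc 1 G.omega := by
  obtain ⟨-, hup, hdn, hed, -⟩ := hG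
  exact Finset.mem_product.2 ⟨hup (hed p hp).1, hdn (hed p hp).2.1⟩

theorem ext {G G' : BD} (hlam : G.lam = G'.lam) (hup : G.up = G'.up) (hdn : G.dn = G'.dn)
    (hed : G.ed = G'.ed) : G = G' := by
  cases G; cases G'; simp_all only

namespace Embedding

/-- The set of vertices of `G` onto which `D` is embedded. -/
def range (e : Embedding D G) : Finset ℕ := (Finset.Icc 1 D.nv).image e.vertex

theorem vertex_mem_image_iff (e : Embedding D G) (hJ : J ⊆ Finset.Icc 1 D.nv) {i : ℕ}
    (hi : i ∈ Finset.Icc 1 D.nv) : e.vertex i ∈ J.image e.vertex ↔ i ∈ J := by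
  have h := e.strictMonoOn_vertex.injOn.mem_image_iff (Finset.coe_subset.2 hJ) hi
  simpa only [← Finset.coe_image, Finset.mem_coe] using h

theorem image_vertex_subset_range (e : Embedding D G) (hJ : J ⊆ Finset.Icc 1 D.nv) :
    J.image e.vertex ⊆ e.range := Finset.image_subset_image hJ

theorem range_subset (e : Embedding D G) : e.range ⊆ Finset.Icc 1 G.nv :=
  Finset.image_subset_iff.2 e.vertex_mem

theorem half_mem_HI_range (e : Embedding D G) {k : ℕ} (hk : k ∈ Finset.Icc 1 D.omega) :
    e.half k ∈ G.HI e.range := e.image_half ▸ Finset.mem_image_of_mem _ hk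

theorem image_half_HI (e : Embedding D G) (hJ : J ⊆ Finset.Icc 1 D.nv) :
    (D.HI J).image e.half = G.HI (J.image e.vertex) := by
  ext l
  rw [Finset.mem_image]
  constructor
  · rintro ⟨k, hk, rfl⟩
    obtain ⟨hk, hv⟩ := mem_HI.1 hk
    rw [mem_HI, e.v_half k hk]
    exact ⟨(mem_HI.1 (e.half_mem_HI_range hk)).1, Finset.mem_image_of_mem _ hv⟩
  · intro hl
    obtain ⟨hl, hv⟩ := mem_HI.1 hl
    have hmem : l ∈ (Finset.Icc 1 D.omega).image e.half :=
      e.image_half ▸ mem_HI.2 ⟨hl, Finset.image_subset_image hJ hv⟩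
    obtain ⟨k, hk, rfl⟩ := Finset.mem_image.1 hmem
    rw [e.v_half k hk, e.vertex_mem_image_iff hJ (v_mem_Icc hk)] at hv
    exact ⟨k, mem_HI.2 ⟨hk, hv⟩, rfl⟩

theorem card_HI_image (e : Embedding D G) (hJ : J ⊆ Finset.Icc 1 D.nv) :
    (G.HI (J.image e.vertex)).card = (D.HI J).card := by
  rw [← e.image_half_HI hJ]
  exact Finset.card_image_of_injOn (e.strictMonoOn_half.injOn.mono
    (Finset.coe_subset.2 (Finset.filter_subset _ _)))

theorem lam_getElem (e : Embedding D G) {i : ℕ} (hi : i < D.lam.length) :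
    D.lam[i] = (G.HI {e.vertex (i + 1)}).card := by
  have hmem : i + 1 ∈ Finset.Icc 1 D.nv := Finset.mem_Icc.2 ⟨Nat.succ_pos i, hi⟩
  rw [← Finset.image_singleton, e.card_HI_image (Finset.singleton_subset_iff.2 hmem),
    card_HI_singleton, List.getD_eq_getElem]

theorem eq_of_range_eq (e : Embedding D G) (e' : Embedding D' G) (h : e.range = e'.range) :
    D = D' := by
  have hnv : D.nv = D'.nv := by
    have hcard := congrArg Finset.card h
    rwa [range, range, Finset.card_image_of_injOn e.strictMonoOn_vertex.injOn,
      Finset.card_image_of_injOn e'.strictMonoOn_vertex.injOn, Nat.card_Icc, Nat.card_Icc,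
      Nat.add_sub_cancel, Nat.add_sub_cancel] at hcard
  have himage : (Finset.Icc 1 D.omega).image e.half = (Finset.Icc 1 D'.omega).image e'.half := by
    rw [e.image_half, e'.image_half]
    exact congrArg _ h
  have homega : D.omega = D'.omega := by
    have hcard := congrArg Finset.card himage
    rwa [Finset.card_image_of_injOn e.strictMonoOn_half.injOn,
      Finset.card_image_of_injOn e'.strictMonoOn_half.injOn, Nat.card_Icc, Nat.card_Icc,
      Nat.add_sub_cancel, Nat.add_sub_cancel] at hcard
  have hvertex : Set.EqOn e.vertex e'.vertex (Finset.Icc 1 D.nv) :=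
    eqOn_of_strictMonoOn_of_image_eq e.strictMonoOn_vertex (hnv ▸ e'.strictMonoOn_vertex)
      (h.trans (by rw [hnv, range]))
  have hhalf {k : ℕ} (hk : k ∈ Finset.Icc 1 D.omega) : e.half k = e'.half k :=
    eqOn_of_strictMonoOn_of_image_eq e.strictMonoOn_half (homega ▸ e'.strictMonoOn_half)
      (himage.trans (by rw [homega])) hk
  have hlam : D.lam = D'.lam := List.ext_getElem hnv fun i hi hi' ↦ by
    rw [e.lam_getElem hi, e'.lam_getElem hi', hvertex (Finset.mem_Icc.2 ⟨Nat.succ_pos i, hi⟩)]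
  refine BD.ext hlam ?_ ?_ ?_ <;> ext k
  · rw [e.mem_up, e'.mem_up, ← homega, and_congr_right fun hk ↦ by rw [hhalf hk]]
  · rw [e.mem_dn, e'.mem_dn, ← homega, and_congr_right fun hk ↦ by rw [hhalf hk]]
  · rw [e.mem_ed, e'.mem_ed, ← homega, and_congr_right fun hk ↦ ?_]
    rw [Prod.map, Prod.map, hhalf (Finset.mem_product.1 hk).1, hhalf (Finset.mem_product.1 hk).2]

theorem lam_pos (e : Embedding D G) (hG : ∀ x ∈ G.lam, 0 < x) : ∀ x ∈ D.lam, 0 < x := by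
  intro x hx
  obtain ⟨i, hi, rfl⟩ := List.getElem_of_mem hx
  obtain ⟨hpos, hle⟩ :=
    Finset.mem_Icc.1 (e.vertex_mem (i + 1) (Finset.mem_Icc.2 ⟨Nat.succ_pos i, hi⟩))
  obtain ⟨j, hj⟩ := Nat.exists_eq_add_of_le' hpos
  have hjG : j < G.lam.length := by rw [hj] at hle; exact hle
  rw [e.lam_getElem hi, hj, card_HI_singleton, List.getD_eq_getElem _ _ hjG]
  exact hG _ (List.getElem_mem hjG)

theorem valid (e : Embedding D G) (hG : G.Valid) : D.Valid := by
  obtain ⟨hlam, -, -, hed, hfst, hsnd⟩ := hG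
  have half_injOn := e.strictMonoOn_half.injOn
  refine ⟨e.lam_pos hlam, fun k hk ↦ ((e.mem_up k).1 hk).1, fun k hk ↦ ((e.mem_dn k).1 hk).1,
    fun p hp ↦ ?_, fun p hp q hq hpq ↦ ?_, fun p hp q hq hpq ↦ ?_⟩
  · obtain ⟨hmem, hpG⟩ := (e.mem_ed p).1 hp
    obtain ⟨hp₁, hp₂⟩ := Finset.mem_product.1 hmem
    obtain ⟨hup, hdn, hlt⟩ := hed _ hpG
    rw [Prod.map, e.v_half _ hp₁, e.v_half _ hp₂,
      e.strictMonoOn_vertex.lt_iff_lt (v_mem_Icc hp₁) (v_mem_Icc hp₂)] at hlt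
    exact ⟨(e.mem_up _).2 ⟨hp₁, hup⟩, (e.mem_dn _).2 ⟨hp₂, hdn⟩, hlt⟩
  all_goals
    obtain ⟨hmem, hpG⟩ := (e.mem_ed p).1 hp
    obtain ⟨hmem', hqG⟩ := (e.mem_ed q).1 hq
    obtain ⟨hp₁, hp₂⟩ := Finset.mem_product.1 hmem
    obtain ⟨hq₁, hq₂⟩ := Finset.mem_product.1 hmem'
  · have heq := congrArg Prod.snd (hfst _ hpG _ hqG (congrArg e.half hpq))
    exact Prod.ext hpq (half_injOn hp₂ hq₂ heq)
  · have heq := congrArg Prod.fst (hsnd _ hpG _ hqG (congrArg e.half hpq))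
    exact Prod.ext (half_injOn hp₁ hq₁ heq) hpq

/-- The composition of embeddings. -/
def trans (e : Embedding C D) (e' : Embedding D G) : Embedding C G where
  half := e'.half ∘ e.half
  vertex := e'.vertex ∘ e.vertex
  strictMonoOn_half := e'.strictMonoOn_half.comp e.strictMonoOn_half fun _ hk ↦
    (mem_HI.1 (e.half_mem_HI_range hk)).1
  strictMonoOn_vertex := e'.strictMonoOn_vertex.comp e.strictMonoOn_vertex e.vertex_mem
  vertex_mem i hi := e'.vertex_mem _ (e.vertex_mem i hi)
  image_half := by
    rw [← Finset.image_image, ← Finset.image_image, e.image_half]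
    exact e'.image_half_HI e.range_subset
  v_half k hk := by
    rw [Function.comp_apply, Function.comp_apply, e'.v_half _ (mem_HI.1 (e.half_mem_HI_range hk)).1,
      e.v_half k hk]
  mem_up k := by
    rw [e.mem_up, e'.mem_up]
    exact and_congr_right fun hk ↦ and_iff_right (mem_HI.1 (e.half_mem_HI_range hk)).1
  mem_dn k := by
    rw [e.mem_dn, e'.mem_dn]
    exact and_congr_right fun hk ↦ and_iff_right (mem_HI.1 (e.half_mem_HI_range hk)).1
  mem_ed p := by
    rw [e.mem_ed, e'.mem_ed]
    refine and_congr_right fun hp ↦ and_iff_right ?_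
    obtain ⟨hp₁, hp₂⟩ := Finset.mem_product.1 hp
    exact Finset.mem_product.2
      ⟨(mem_HI.1 (e.half_mem_HI_range hp₁)).1, (mem_HI.1 (e.half_mem_HI_range hp₂)).1⟩

theorem range_trans (e : Embedding C D) (e' : Embedding D G) :
    (e.trans e').range = e.range.image e'.vertex := by
  rw [range, range, Finset.image_image]
  rfl

theorem isolated_image_iff (e : Embedding D G) (hG : G.Valid) (hrange : G.Isolated e.range)
    (hJ : J ⊆ Finset.Icc 1 D.nv) : G.Isolated (J.image e.vertex) ↔ D.Isolated J := by
  have v_half_mem_iff {k : ℕ} (hk : k ∈ Finset.Icc 1 D.omega) :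
      G.v (e.half k) ∈ J.image e.vertex ↔ D.v k ∈ J := by
    rw [e.v_half k hk, e.vertex_mem_image_iff hJ (v_mem_Icc hk)]
  constructor
  · intro h p hp
    obtain ⟨hmem, hpG⟩ := (e.mem_ed p).1 hp
    obtain ⟨hp₁, hp₂⟩ := Finset.mem_product.1 hmem
    rw [← v_half_mem_iff hp₁, ← v_half_mem_iff hp₂]
    exact h _ hpG
  · rintro h ⟨k, l⟩ hp
    by_cases hk : G.v k ∈ e.range
    · obtain ⟨hkG, hlG⟩ := Finset.mem_product.1 (hG.mem_Icc_of_mem_ed hp)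
      have hk' : k ∈ (Finset.Icc 1 D.omega).image e.half := e.image_half ▸ mem_HI.2 ⟨hkG, hk⟩
      have hl' : l ∈ (Finset.Icc 1 D.omega).image e.half :=
        e.image_half ▸ mem_HI.2 ⟨hlG, (hrange _ hp).1 hk⟩
      obtain ⟨k, hkD, rfl⟩ := Finset.mem_image.1 hk'
      obtain ⟨l, hlD, rfl⟩ := Finset.mem_image.1 hl'
      rw [v_half_mem_iff hkD, v_half_mem_iff hlD]
      exact h (k, l) ((e.mem_ed _).2 ⟨Finset.mem_product.2 ⟨hkD, hlD⟩, hp⟩)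
    · have not_mem {i : ℕ} (hi : i ∉ e.range) : i ∉ J.image e.vertex :=
        fun h ↦ hi (e.image_vertex_subset_range hJ h)
      exact iff_of_false (not_mem hk) (not_mem fun hl ↦ hk ((hrange _ hp).2 hl))

end Embedding

end Embedding

section Sub

variable {D G : BD} {I J : Finset ℕ}

theorem sort_eq_map_filter_range (hI : I ⊆ Finset.Icc 1 G.nv) :
    I.sort = ((List.range G.lam.length).filter (· + 1 ∈ I)).map (· + 1) := by
  have hpairwise : (((List.range G.lam.length).filter (· + 1 ∈ I)).map (· + 1)).Pairwise (· < ·) :=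
    (List.pairwise_lt_range.filter _).map _ fun _ _ h ↦ Nat.succ_lt_succ h
  rw [← (List.toFinset_sort (· ≤ ·) hpairwise.nodup).2 (hpairwise.imp le_of_lt)]
  congr 1
  ext i
  simp only [List.mem_toFinset, List.mem_map, List.mem_filter, List.mem_range, decide_eq_true_eq]
  constructor
  · intro hi
    obtain ⟨hpos, hle⟩ := Finset.mem_Icc.1 (hI hi)
    obtain ⟨j, rfl⟩ := Nat.exists_eq_add_of_le' hpos
    exact ⟨j, ⟨hle, hi⟩, rfl⟩
  · rintro ⟨j, ⟨-, hj⟩, rfl⟩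
    exact hj

theorem sub_lam (hI : I ⊆ Finset.Icc 1 G.nv) :
    (G.sub I).lam = I.sort.map fun i ↦ (G.HI {i}).card := by
  rw [sub, sort_eq_map_filter_range hI, List.map_map]
  refine List.map_congr_left fun i _ ↦ ?_
  rw [Function.comp_apply, card_HI_singleton]

theorem nv_sub (hI : I ⊆ Finset.Icc 1 G.nv) : (G.sub I).nv = I.card := by
  rw [nv, sub_lam hI, List.length_map, Finset.length_sort]

theorem omega_sub (hI : I ⊆ Finset.Icc 1 G.nv) : (G.sub I).omega = (G.HI I).card := by
  rw [omega, sub_lam hI, ((Finset.sort_perm_toList I (· ≤ ·)).map _).sum_eq, Finset.sum_map_toList,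
    card_HI]

theorem card_fiber_v_nthElement_HI (hI : I ⊆ Finset.Icc 1 G.nv) (j : ℕ) :
    ((Finset.Icc 1 (G.sub I).omega).filter (fun k ↦ G.v (nthElement (G.HI I) k) = j)).card =
      (G.HI (I.filter (· = j))).card := by
  rw [omega_sub hI, card_filter_nthElement (G.HI I) (G.v · = j), HI, HI, Finset.filter_filter]
  simp only [Finset.mem_filter]

theorem card_fiber_nthElement_v_sub (hI : I ⊆ Finset.Icc 1 G.nv) (j : ℕ) :
    ((Finset.Icc 1 (G.sub I).omega).filter (fun k ↦ nthElement I ((G.sub I).v k) = j)).card =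
      (G.HI (I.filter (· = j))).card := by
  have v_mem {k : ℕ} (hk : k ∈ Finset.Icc 1 (G.sub I).omega) :
      (G.sub I).v k ∈ Finset.Icc 1 I.card := nv_sub hI ▸ v_mem_Icc hk
  by_cases hj : j ∈ I
  · obtain ⟨i, hi, rfl⟩ := exists_nthElement_eq hj
    have hfiber : (Finset.Icc 1 (G.sub I).omega).filter
        (fun k ↦ nthElement I ((G.sub I).v k) = nthElement I i) = (G.sub I).HI {i} := by
      refine Finset.filter_congr fun k hk ↦ ?_
      rw [(strictMonoOn_nthElement I).injOn.eq_iff (v_mem hk) hi, Finset.mem_singleton]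
    obtain ⟨i, rfl⟩ := Nat.exists_eq_add_of_le' (Finset.mem_Icc.1 hi).1
    have hlen : i < I.sort.length := by
      rw [Finset.length_sort]
      exact (Finset.mem_Icc.1 hi).2
    rw [hfiber, card_HI_singleton, sub_lam hI, List.getD_eq_getElem _ _ (by simpa using hlen),
      List.getElem_map, ← nthElement_eq_getElem hlen, Finset.filter_eq', if_pos (nthElement_mem hi)]
  · rw [Finset.filter_eq', if_neg hj, Finset.filter_false_of_mem, HI]
    · simp only [Finset.notMem_empty, Finset.filter_false, Finset.card_empty]
    · exact fun k hk h ↦ hj (h ▸ nthElement_mem (v_mem hk))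

theorem v_nthElement_HI (hI : I ⊆ Finset.Icc 1 G.nv) {k : ℕ}
    (hk : k ∈ Finset.Icc 1 (G.sub I).omega) :
    G.v (nthElement (G.HI I) k) = nthElement I ((G.sub I).v k) := by
  refine eqOn_of_monotoneOn_of_card_fiber_eq (S := Finset.Icc 1 (G.sub I).omega)
    (f := fun k ↦ G.v (nthElement (G.HI I) k)) (g := fun k ↦ nthElement I ((G.sub I).v k))
    ?_ ?_ (fun j ↦ by rw [card_fiber_v_nthElement_HI hI, card_fiber_nthElement_v_sub hI]) hk
  · rw [omega_sub hI]
    exact fun k hk l hl h ↦ v_mono ((strictMonoOn_nthElement _).monotoneOn hk hl h)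
  · refine fun k hk l hl h ↦ (strictMonoOn_nthElement _).monotoneOn ?_ ?_ (v_mono h)
    · exact nv_sub hI ▸ v_mem_Icc hk
    · exact nv_sub hI ▸ v_mem_Icc hl

theorem phi_nthElement {k : ℕ} (hk : k ∈ Finset.Icc 1 (G.HI I).card) :
    G.phi I (nthElement (G.HI I) k) = k := card_filter_le_nthElement hk

theorem mem_image_phi_iff {X : Finset ℕ} {k : ℕ} : k ∈ (X ∩ G.HI I).image (G.phi I) ↔
    k ∈ Finset.Icc 1 (G.HI I).card ∧ nthElement (G.HI I) k ∈ X := by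
  rw [Finset.mem_image]
  constructor
  · rintro ⟨a, ha, rfl⟩
    obtain ⟨haX, ha⟩ := Finset.mem_inter.1 ha
    obtain ⟨k, hk, rfl⟩ := exists_nthElement_eq ha
    rw [phi_nthElement hk]
    exact ⟨hk, haX⟩
  · rintro ⟨hk, hX⟩
    exact ⟨_, Finset.mem_inter.2 ⟨hX, nthElement_mem hk⟩, phi_nthElement hk⟩

theorem mem_sub_ed_iff (hG : G.Valid) {p : ℕ × ℕ} : p ∈ (G.sub I).ed ↔
    p ∈ Finset.Icc 1 (G.HI I).card ×ˢ Finset.Icc 1 (G.HI I).card ∧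
      p.map (nthElement (G.HI I)) (nthElement (G.HI I)) ∈ G.ed := by
  rw [sub, Finset.mem_image]
  constructor
  · rintro ⟨⟨a, b⟩, hab, rfl⟩
    obtain ⟨hab, ha, hb⟩ := Finset.mem_filter.1 hab
    obtain ⟨haG, hbG⟩ := Finset.mem_product.1 (hG.mem_Icc_of_mem_ed hab)
    obtain ⟨k, hk, rfl⟩ := exists_nthElement_eq (mem_HI.2 ⟨haG, ha⟩)
    obtain ⟨l, hl, rfl⟩ := exists_nthElement_eq (mem_HI.2 ⟨hbG, hb⟩)
    rw [phi_nthElement hk, phi_nthElement hl]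
    exact ⟨Finset.mem_product.2 ⟨hk, hl⟩, hab⟩
  · rintro ⟨hp, hpG⟩
    obtain ⟨hp₁, hp₂⟩ := Finset.mem_product.1 hp
    exact ⟨_, Finset.mem_filter.2 ⟨hpG, (mem_HI.1 (nthElement_mem hp₁)).2,
      (mem_HI.1 (nthElement_mem hp₂)).2⟩,
      Prod.ext (phi_nthElement hp₁) (phi_nthElement hp₂)⟩

/-- The inclusion of the sub-B-diagram `G[I]` in `G`. -/
def subEmbedding (hG : G.Valid) (hI : I ⊆ Finset.Icc 1 G.nv) : Embedding (G.sub I) G where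
  half := nthElement (G.HI I)
  vertex := nthElement I
  strictMonoOn_half := omega_sub hI ▸ strictMonoOn_nthElement _
  strictMonoOn_vertex := nv_sub hI ▸ strictMonoOn_nthElement I
  vertex_mem _ hi := hI (nthElement_mem (nv_sub hI ▸ hi))
  image_half := by rw [omega_sub hI, nv_sub hI, image_nthElement, image_nthElement]
  v_half _ hk := v_nthElement_HI hI hk
  mem_up _ := omega_sub hI ▸ mem_image_phi_iff
  mem_dn _ := omega_sub hI ▸ mem_image_phi_iff
  mem_ed _ := omega_sub hI ▸ mem_sub_ed_iff hG

theorem range_subEmbedding (hG : G.Valid) (hI : I ⊆ Finset.Icc 1 G.nv) :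
    (subEmbedding hG hI).range = I := by
  change (Finset.Icc 1 (G.sub I).nv).image (nthElement I) = I
  rw [nv_sub hI, image_nthElement]

theorem Valid.sub (hG : G.Valid) (hI : I ⊆ Finset.Icc 1 G.nv) : (G.sub I).Valid :=
  (subEmbedding hG hI).valid hG

theorem Embedding.sub_range (e : Embedding D G) (hG : G.Valid) : G.sub e.range = D :=
  (subEmbedding hG e.range_subset).eq_of_range_eq e (range_subEmbedding hG _)

theorem Embedding.sub_image_vertex (e : Embedding D G) (hG : G.Valid)
    (hJ : J ⊆ Finset.Icc 1 D.nv) : G.sub (J.image e.vertex) = D.sub J := by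
  have hrange : ((subEmbedding (e.valid hG) hJ).trans e).range = J.image e.vertex := by
    rw [range_trans, range_subEmbedding]
  rw [← hrange, sub_range _ hG]

end Sub

/-! ### Juxtaposition -/

section Juxt

theorem mem_Icc_one_add_iff {k m n : ℕ} :
    k ∈ Finset.Icc 1 (m + n) ↔ k ∈ Finset.Icc 1 m ∨ ∃ l ∈ Finset.Icc 1 n, l + m = k := by
  simp only [Finset.mem_Icc]
  refine ⟨fun h ↦ ?_, by grind⟩
  obtain hk | hk := le_or_gt k m
  · exact Or.inl ⟨h.1, hk⟩
  · exact Or.inr ⟨k - m, by omega, by omega⟩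

section UnionImage

variable {X Y : Finset ℕ} {k m n : ℕ}

theorem mem_union_image_add_left (hY : Y ⊆ Finset.Icc 1 n) (hk : k ≤ m) :
    k ∈ X ∪ Y.image (· + m) ↔ k ∈ X := by
  rw [Finset.mem_union, Finset.mem_image, or_iff_left]
  rintro ⟨l, hl, rfl⟩
  have := Finset.mem_Icc.1 (hY hl)
  omega

theorem mem_union_image_add_right (hX : X ⊆ Finset.Icc 1 m) (hk : 1 ≤ k) :
    k + m ∈ X ∪ Y.image (· + m) ↔ k ∈ Y := by
  rw [Finset.mem_union, (add_left_injective m).mem_finset_image, or_iff_right]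
  intro h
  have := Finset.mem_Icc.1 (hX h)
  omega

end UnionImage

variable (A B : BD)

@[simp] theorem nv_juxt : (juxt A B).nv = A.nv + B.nv := List.length_append

@[simp] theorem omega_juxt : (juxt A B).omega = A.omega + B.omega := List.sum_append

theorem prefixSum_juxt (i : ℕ) :
    (juxt A B).prefixSum i = A.prefixSum i + B.prefixSum (i - A.nv) := by
  simp only [prefixSum, juxt, comp, nv, List.take_append, List.sum_append]

variable {A B}

theorem v_juxt_of_le {k : ℕ} (hk : k ≤ A.omega) : (juxt A B).v k = A.v k := by
  refine eq_of_forall_lt_iff fun i ↦ ?_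
  rw [lt_v_iff, lt_v_iff, prefixSum_juxt, nv_juxt]
  obtain hi | hi := lt_or_ge i A.nv
  · rw [Nat.sub_eq_zero_of_le hi.le, prefixSum, prefixSum, List.take_zero, List.sum_nil]
    omega
  · have : A.prefixSum i = A.omega := by rw [prefixSum, List.take_of_length_le hi, omega]
    omega

theorem v_juxt_add {k : ℕ} (hk : 1 ≤ k) : (juxt A B).v (k + A.omega) = B.v k + A.nv := by
  refine eq_of_forall_lt_iff fun i ↦ ?_
  rw [lt_v_iff, prefixSum_juxt, nv_juxt]
  obtain hi | hi := lt_or_ge i A.nv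
  · have := A.prefixSum_le_omega i
    rw [Nat.sub_eq_zero_of_le hi.le, prefixSum, prefixSum, List.take_zero, List.sum_nil]
    rw [prefixSum] at this
    omega
  · have hsum : A.prefixSum i = A.omega := by rw [prefixSum, List.take_of_length_le hi, omega]
    have hlt := @lt_v_iff B (i - A.nv) k
    omega

theorem mem_juxt_ed {p : ℕ × ℕ} : p ∈ (juxt A B).ed ↔
    p ∈ A.ed ∨ ∃ q ∈ B.ed, q.map (· + A.omega) (· + A.omega) = p := by
  simp only [juxt, comp, Finset.image_empty, Finset.union_empty, Finset.mem_union,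
    Finset.mem_image, Prod.map_def]

/-- The left factor of a juxtaposition. -/
def juxtLeft (hA : A.Valid) (hB : B.Valid) : Embedding A (juxt A B) where
  half k := k
  vertex i := i
  strictMonoOn_half := strictMonoOn_id
  strictMonoOn_vertex := strictMonoOn_id
  vertex_mem i hi := by
    rw [nv_juxt, mem_Icc_one_add_iff]
    exact Or.inl hi
  image_half := by
    ext k
    rw [Finset.image_id', Finset.image_id', mem_HI, omega_juxt]
    constructor
    · intro hk
      rw [v_juxt_of_le (Finset.mem_Icc.1 hk).2]
      exact ⟨mem_Icc_one_add_iff.2 (Or.inl hk), v_mem_Icc hk⟩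
    · rintro ⟨hk, hv⟩
      obtain hk | ⟨l, hl, rfl⟩ := mem_Icc_one_add_iff.1 hk
      · exact hk
      · rw [v_juxt_add (Finset.mem_Icc.1 hl).1] at hv
        have := Finset.mem_Icc.1 hv
        have := Finset.mem_Icc.1 (v_mem_Icc hl)
        omega
  v_half k hk := v_juxt_of_le (Finset.mem_Icc.1 hk).2
  mem_up k := by
    refine ⟨fun h ↦ ⟨hA.2.1 h, Finset.mem_union_left _ h⟩, fun ⟨hk, h⟩ ↦ ?_⟩
    exact (mem_union_image_add_left hB.2.1 (Finset.mem_Icc.1 hk).2).1 h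
  mem_dn k := by
    refine ⟨fun h ↦ ⟨hA.2.2.1 h, Finset.mem_union_left _ h⟩, fun ⟨hk, h⟩ ↦ ?_⟩
    exact (mem_union_image_add_left hB.2.2.1 (Finset.mem_Icc.1 hk).2).1 h
  mem_ed p := by
    refine ⟨fun h ↦ ⟨hA.mem_Icc_of_mem_ed h, mem_juxt_ed.2 (Or.inl h)⟩, fun ⟨hp, h⟩ ↦ ?_⟩
    obtain h | ⟨q, hq, hqp⟩ := mem_juxt_ed.1 h
    · exact h
    · have hq := Finset.mem_product.1 (hB.mem_Icc_of_mem_ed hq)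
      simp only [Finset.mem_product, Finset.mem_Icc, Prod.ext_iff, Prod.map_fst] at hp hq hqp
      omega

/-- The right factor of a juxtaposition. -/
def juxtRight (hA : A.Valid) (hB : B.Valid) : Embedding B (juxt A B) where
  half k := k + A.omega
  vertex i := i + A.nv
  strictMonoOn_half := (strictMono_id.add_const _).strictMonoOn _
  strictMonoOn_vertex := (strictMono_id.add_const _).strictMonoOn _
  vertex_mem i hi := by
    rw [nv_juxt, mem_Icc_one_add_iff]
    exact Or.inr ⟨i, hi, rfl⟩
  image_half := by
    ext k
    simp only [Finset.mem_image, mem_HI, omega_juxt]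
    constructor
    · rintro ⟨l, hl, rfl⟩
      rw [v_juxt_add (Finset.mem_Icc.1 hl).1]
      exact ⟨mem_Icc_one_add_iff.2 (Or.inr ⟨l, hl, rfl⟩), B.v l, v_mem_Icc hl, rfl⟩
    · rintro ⟨hk, i, hi, hv⟩
      obtain hk | hk := mem_Icc_one_add_iff.1 hk
      · rw [v_juxt_of_le (Finset.mem_Icc.1 hk).2] at hv
        have := Finset.mem_Icc.1 hi
        have := Finset.mem_Icc.1 (v_mem_Icc hk)
        omega
      · exact hk
  v_half k hk := v_juxt_add (Finset.mem_Icc.1 hk).1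
  mem_up k := by
    refine ⟨fun h ↦ ⟨hB.2.1 h, ?_⟩, fun ⟨hk, h⟩ ↦ ?_⟩
    · exact Finset.mem_union_right _ (Finset.mem_image_of_mem _ h)
    · exact (mem_union_image_add_right hA.2.1 (Finset.mem_Icc.1 hk).1).1 h
  mem_dn k := by
    refine ⟨fun h ↦ ⟨hB.2.2.1 h, ?_⟩, fun ⟨hk, h⟩ ↦ ?_⟩
    · exact Finset.mem_union_right _ (Finset.mem_image_of_mem _ h)
    · exact (mem_union_image_add_right hA.2.2.1 (Finset.mem_Icc.1 hk).1).1 h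
  mem_ed p := by
    refine ⟨fun h ↦ ⟨hB.mem_Icc_of_mem_ed h, mem_juxt_ed.2 (Or.inr ⟨p, h, rfl⟩)⟩,
      fun ⟨hp, h⟩ ↦ ?_⟩
    obtain h | ⟨q, hq, hqp⟩ := mem_juxt_ed.1 h
    · have hA := Finset.mem_product.1 (hA.mem_Icc_of_mem_ed h)
      simp only [Finset.mem_product, Finset.mem_Icc, Prod.map_fst] at hp hA
      omega
    · rwa [← (add_left_injective A.omega).prodMap (add_left_injective A.omega) hqp]

@[simp] theorem juxtLeft_vertex (hA : A.Valid) (hB : B.Valid) (i : ℕ) :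
    (juxtLeft hA hB).vertex i = i := rfl

@[simp] theorem juxtRight_vertex (hA : A.Valid) (hB : B.Valid) (i : ℕ) :
    (juxtRight hA hB).vertex i = i + A.nv := rfl

theorem range_juxtLeft (hA : A.Valid) (hB : B.Valid) :
    (juxtLeft hA hB).range = Finset.Icc 1 A.nv := Finset.image_id'

theorem range_juxtRight (hA : A.Valid) (hB : B.Valid) :
    (juxtRight hA hB).range = Finset.Icc 1 (juxt A B).nv \ (juxtLeft hA hB).range := by
  ext i
  rw [range_juxtLeft, nv_juxt, Finset.mem_sdiff, Embedding.range, Finset.mem_image]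
  simp only [juxtRight_vertex, Finset.mem_Icc]
  exact ⟨by grind, fun h ↦ ⟨i - A.nv, by omega, by omega⟩⟩

end Juxt

section Copair

variable {A B G : BD}

/-- The map equal to `f` on `1, …, m` and to `l ↦ f' (l - m)` on `m + 1, m + 2, …`. -/
def copairMap (m : ℕ) (f f' : ℕ → ℕ) (k : ℕ) : ℕ := if k ≤ m then f k else f' (k - m)

section CopairMap

variable {m n : ℕ} {f f' : ℕ → ℕ}

theorem copairMap_of_le {k : ℕ} (hk : k ≤ m) : copairMap m f f' k = f k := if_pos hk

theorem copairMap_add {k : ℕ} (hk : 1 ≤ k) : copairMap m f f' (k + m) = f' k := by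
  rw [copairMap, if_neg (by omega), Nat.add_sub_cancel]

theorem strictMonoOn_copairMap (hf : StrictMonoOn f (Finset.Icc 1 m))
    (hf' : StrictMonoOn f' (Finset.Icc 1 n))
    (hlt : ∀ k ∈ Finset.Icc 1 m, ∀ l ∈ Finset.Icc 1 n, f k < f' l) :
    StrictMonoOn (copairMap m f f') (Finset.Icc 1 (m + n)) := by
  intro k hk l hl hkl
  rw [Finset.mem_coe, mem_Icc_one_add_iff] at hk hl
  obtain hk | ⟨k, hk, rfl⟩ := hk <;> obtain hl | ⟨l, hl, rfl⟩ := hl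
  · rw [copairMap_of_le (Finset.mem_Icc.1 hk).2, copairMap_of_le (Finset.mem_Icc.1 hl).2]
    exact hf hk hl hkl
  · rw [copairMap_of_le (Finset.mem_Icc.1 hk).2, copairMap_add (Finset.mem_Icc.1 hl).1]
    exact hlt k hk l hl
  · have := Finset.mem_Icc.1 hk
    have := Finset.mem_Icc.1 hl
    omega
  · rw [copairMap_add (Finset.mem_Icc.1 hk).1, copairMap_add (Finset.mem_Icc.1 hl).1]
    exact hf' hk hl (Nat.lt_of_add_lt_add_right hkl)

theorem image_copairMap : (Finset.Icc 1 (m + n)).image (copairMap m f f') =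
    (Finset.Icc 1 m).image f ∪ (Finset.Icc 1 n).image f' := by
  ext l
  simp only [Finset.mem_union, Finset.mem_image]
  constructor
  · rintro ⟨k, hk, rfl⟩
    obtain hk | ⟨j, hj, rfl⟩ := mem_Icc_one_add_iff.1 hk
    · exact Or.inl ⟨k, hk, (copairMap_of_le (Finset.mem_Icc.1 hk).2).symm⟩
    · exact Or.inr ⟨j, hj, (copairMap_add (Finset.mem_Icc.1 hj).1).symm⟩
  · rintro (⟨k, hk, rfl⟩ | ⟨k, hk, rfl⟩)
    · exact ⟨k, mem_Icc_one_add_iff.2 (Or.inl hk), copairMap_of_le (Finset.mem_Icc.1 hk).2⟩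
    · exact ⟨k + m, mem_Icc_one_add_iff.2 (Or.inr ⟨k, hk, rfl⟩),
        copairMap_add (Finset.mem_Icc.1 hk).1⟩

theorem mem_union_image_add_iff_copairMap {X Y Z : Finset ℕ}
    (hX : ∀ k, k ∈ X ↔ k ∈ Finset.Icc 1 m ∧ f k ∈ Z)
    (hY : ∀ k, k ∈ Y ↔ k ∈ Finset.Icc 1 n ∧ f' k ∈ Z) (k : ℕ) :
    k ∈ X ∪ Y.image (· + m) ↔ k ∈ Finset.Icc 1 (m + n) ∧ copairMap m f f' k ∈ Z := by
  have hXm : X ⊆ Finset.Icc 1 m := fun k hk ↦ ((hX k).1 hk).1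
  have hYn : Y ⊆ Finset.Icc 1 n := fun k hk ↦ ((hY k).1 hk).1
  constructor
  · rw [Finset.mem_union, Finset.mem_image, mem_Icc_one_add_iff]
    rintro (hk | ⟨l, hl, rfl⟩)
    · rw [copairMap_of_le (Finset.mem_Icc.1 (hXm hk)).2]
      exact ⟨Or.inl (hXm hk), ((hX k).1 hk).2⟩
    · rw [copairMap_add (Finset.mem_Icc.1 (hYn hl)).1]
      exact ⟨Or.inr ⟨l, hYn hl, rfl⟩, ((hY l).1 hl).2⟩
  · rintro ⟨hk, hZ⟩
    obtain hk | ⟨l, hl, rfl⟩ := mem_Icc_one_add_iff.1 hk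
    · rw [copairMap_of_le (Finset.mem_Icc.1 hk).2] at hZ
      exact Finset.mem_union_left _ ((hX k).2 ⟨hk, hZ⟩)
    · rw [copairMap_add (Finset.mem_Icc.1 hl).1] at hZ
      exact Finset.mem_union_right _ (Finset.mem_image_of_mem _ ((hY l).2 ⟨hl, hZ⟩))

end CopairMap

namespace Embedding

theorem v_half_mem_range (e : Embedding A G) {k : ℕ} (hk : k ∈ Finset.Icc 1 A.omega) :
    G.v (e.half k) ∈ e.range := (mem_HI.1 (e.half_mem_HI_range hk)).2

variable (e : Embedding A G) (e' : Embedding B G)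

theorem half_lt_half (hlt : ∀ i ∈ e.range, ∀ j ∈ e'.range, i < j) {k l : ℕ}
    (hk : k ∈ Finset.Icc 1 A.omega) (hl : l ∈ Finset.Icc 1 B.omega) : e.half k < e'.half l :=
  v_mono.reflect_lt (hlt _ (e.v_half_mem_range hk) _ (e'.v_half_mem_range hl))

theorem mem_juxt_ed_iff (hdisj : Disjoint e.range e'.range) (hiso : G.Isolated e.range)
    (p : ℕ × ℕ) : p ∈ (BD.juxt A B).ed ↔
      p ∈ Finset.Icc 1 (A.omega + B.omega) ×ˢ Finset.Icc 1 (A.omega + B.omega) ∧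
        p.map (copairMap A.omega e.half e'.half) (copairMap A.omega e.half e'.half) ∈ G.ed := by
  have hcross : ∀ p ∈ G.ed, ¬ (G.v p.1 ∈ e.range ∧ G.v p.2 ∈ e'.range) ∧
      ¬ (G.v p.1 ∈ e'.range ∧ G.v p.2 ∈ e.range) := fun p hp ↦
    ⟨fun h ↦ Finset.disjoint_left.1 hdisj ((hiso p hp).1 h.1) h.2,
      fun h ↦ Finset.disjoint_left.1 hdisj ((hiso p hp).2 h.2) h.1⟩
  obtain ⟨a, b⟩ := p
  rw [mem_juxt_ed, Finset.mem_product, mem_Icc_one_add_iff, mem_Icc_one_add_iff]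
  constructor
  · rintro (hp | ⟨⟨a, b⟩, hq, hqp⟩)
    · obtain ⟨hIcc, hG⟩ := (e.mem_ed _).1 hp
      obtain ⟨ha, hb⟩ := Finset.mem_product.1 hIcc
      refine ⟨⟨Or.inl ha, Or.inl hb⟩, ?_⟩
      rwa [Prod.map_apply, copairMap_of_le (Finset.mem_Icc.1 ha).2,
        copairMap_of_le (Finset.mem_Icc.1 hb).2]
    · obtain ⟨hIcc, hG⟩ := (e'.mem_ed _).1 hq
      obtain ⟨ha, hb⟩ := Finset.mem_product.1 hIcc
      obtain ⟨rfl, rfl⟩ := Prod.ext_iff.1 hqp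
      refine ⟨⟨Or.inr ⟨_, ha, rfl⟩, Or.inr ⟨_, hb, rfl⟩⟩, ?_⟩
      simp only [Prod.map_apply]
      rwa [copairMap_add (Finset.mem_Icc.1 ha).1, copairMap_add (Finset.mem_Icc.1 hb).1]
  · rintro ⟨⟨ha | ⟨a, ha, rfl⟩, hb | ⟨b, hb, rfl⟩⟩, hG⟩
    all_goals
      simp only [Prod.map_apply, (Finset.mem_Icc.1 ha).1, (Finset.mem_Icc.1 ha).2,
        (Finset.mem_Icc.1 hb).1, (Finset.mem_Icc.1 hb).2, copairMap_of_le, copairMap_add] at hG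
    · exact Or.inl ((e.mem_ed _).2 ⟨Finset.mem_product.2 ⟨ha, hb⟩, hG⟩)
    · exact ((hcross _ hG).1 ⟨e.v_half_mem_range ha, e'.v_half_mem_range hb⟩).elim
    · exact ((hcross _ hG).2 ⟨e'.v_half_mem_range ha, e.v_half_mem_range hb⟩).elim
    · exact Or.inr ⟨(a, b), (e'.mem_ed _).2 ⟨Finset.mem_product.2 ⟨ha, hb⟩, hG⟩, rfl⟩

/-- The embedding of a juxtaposition assembled from embeddings of its two factors. -/
def copair (hlt : ∀ i ∈ e.range, ∀ j ∈ e'.range, i < j) (hiso : G.Isolated e.range) :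
    Embedding (BD.juxt A B) G where
  half := copairMap A.omega e.half e'.half
  vertex := copairMap A.nv e.vertex e'.vertex
  strictMonoOn_half := by
    rw [omega_juxt]
    exact strictMonoOn_copairMap e.strictMonoOn_half e'.strictMonoOn_half
      fun _ hk _ hl ↦ half_lt_half e e' hlt hk hl
  strictMonoOn_vertex := by
    rw [nv_juxt]
    exact strictMonoOn_copairMap e.strictMonoOn_vertex e'.strictMonoOn_vertex
      fun _ hi _ hj ↦ hlt _ (Finset.mem_image_of_mem _ hi) _ (Finset.mem_image_of_mem _ hj)
  vertex_mem := by
    rw [← Finset.image_subset_iff, nv_juxt, image_copairMap]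
    exact Finset.union_subset e.range_subset e'.range_subset
  image_half := by
    rw [omega_juxt, nv_juxt, image_copairMap, image_copairMap, e.image_half, e'.image_half]
    ext k
    simp only [Finset.mem_union, mem_HI, and_or_left]
  v_half k hk := by
    rw [omega_juxt, mem_Icc_one_add_iff] at hk
    obtain hk | ⟨l, hl, rfl⟩ := hk
    · rw [copairMap_of_le (Finset.mem_Icc.1 hk).2, e.v_half k hk,
        v_juxt_of_le (Finset.mem_Icc.1 hk).2, copairMap_of_le (Finset.mem_Icc.1 (v_mem_Icc hk)).2]
    · rw [copairMap_add (Finset.mem_Icc.1 hl).1, e'.v_half l hl,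
        v_juxt_add (Finset.mem_Icc.1 hl).1, copairMap_add (Finset.mem_Icc.1 (v_mem_Icc hl)).1]
  mem_up := by
    rw [omega_juxt]
    exact mem_union_image_add_iff_copairMap e.mem_up e'.mem_up
  mem_dn := by
    rw [omega_juxt]
    exact mem_union_image_add_iff_copairMap e.mem_dn e'.mem_dn
  mem_ed := by
    rw [omega_juxt]
    refine mem_juxt_ed_iff e e' (Finset.disjoint_left.2 fun i hi hi' ↦ ?_) hiso
    exact lt_irrefl i (hlt i hi i hi')

theorem range_copair (hlt : ∀ i ∈ e.range, ∀ j ∈ e'.range, i < j) (hiso : G.Isolated e.range) :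
    (e.copair e' hlt hiso).range = e.range ∪ e'.range := by
  rw [range, nv_juxt]
  exact image_copairMap

end Embedding

end Copair

/-! ### Edges between complementary sub-B-diagrams -/

section Glue

variable {D D' G : BD} {E E₁ E₂ s : Finset (ℕ × ℕ)} {k l : ℕ}

/-- The B-diagram obtained from `G` by replacing its set of edges by `E`. -/
def withEdges (G : BD) (E : Finset (ℕ × ℕ)) : BD := { G with ed := E }

theorem valid_withEdges_iff : (G.withEdges E).Valid ↔ (∀ x ∈ G.lam, 0 < x) ∧
    G.up ⊆ Finset.Icc 1 G.omega ∧ G.dn ⊆ Finset.Icc 1 G.omega ∧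
    (∀ p ∈ E, p.1 ∈ G.up ∧ p.2 ∈ G.dn ∧ G.v p.1 < G.v p.2) ∧
    (∀ p ∈ E, ∀ q ∈ E, p.1 = q.1 → p = q) ∧ (∀ p ∈ E, ∀ q ∈ E, p.2 = q.2 → p = q) := Iff.rfl

theorem Valid.subset_Icc_of_withEdges (h : (G.withEdges E).Valid) :
    E ⊆ Finset.Icc 1 G.omega ×ˢ Finset.Icc 1 G.omega := fun _ ↦ h.mem_Icc_of_mem_ed

theorem mem_HfUp_withEdges : k ∈ (G.withEdges E).HfUp ↔ k ∈ G.up ∧ ∀ p ∈ E, p.1 ≠ k := by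
  simp only [HfUp, Finset.mem_sdiff, Finset.mem_image, not_exists, not_and, ne_eq, withEdges]

theorem mem_HfDn_withEdges : k ∈ (G.withEdges E).HfDn ↔ k ∈ G.dn ∧ ∀ p ∈ E, p.2 ≠ k := by
  simp only [HfDn, Finset.mem_sdiff, Finset.mem_image, not_exists, not_and, ne_eq, withEdges]

theorem Matching.mem_Icc (hG : G.up ⊆ Finset.Icc 1 G.omega) (hG' : D.dn ⊆ Finset.Icc 1 D.omega)
    (hs : Matching G D s) : s ⊆ Finset.Icc 1 G.omega ×ˢ Finset.Icc 1 D.omega := fun p hp ↦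
  Finset.mem_product.2 ⟨hG (Finset.mem_sdiff.1 (hs.1 p hp).1).1,
    hG' (Finset.mem_sdiff.1 (hs.1 p hp).2).1⟩

namespace Embedding

variable (e : Embedding D G) (e' : Embedding D' G)

/-- The pairs of half-edges of `D` and `D'` that are joined in `G` by an edge in `E`. -/
def edgesBetween (E : Finset (ℕ × ℕ)) : Finset (ℕ × ℕ) :=
  {p ∈ Finset.Icc 1 D.omega ×ˢ Finset.Icc 1 D'.omega | p.map e.half e'.half ∈ E}

/-- The set of edges on `G` made of edges `E₁` of `D`, edges `E₂` of `D'`, and edges `s` going from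
`D` to `D'`. -/
def glue (E₁ E₂ s : Finset (ℕ × ℕ)) : Finset (ℕ × ℕ) :=
  E₁.image (Prod.map e.half e.half) ∪ s.image (Prod.map e.half e'.half) ∪
    E₂.image (Prod.map e'.half e'.half)

variable {e e'}

theorem mem_edgesBetween {p : ℕ × ℕ} : p ∈ e.edgesBetween e' E ↔
    p ∈ Finset.Icc 1 D.omega ×ˢ Finset.Icc 1 D'.omega ∧ p.map e.half e'.half ∈ E :=
  Finset.mem_filter

theorem mem_glue {p : ℕ × ℕ} : p ∈ e.glue e' E₁ E₂ s ↔
    (∃ q ∈ E₁, (e.half q.1, e.half q.2) = p) ∨ (∃ q ∈ s, (e.half q.1, e'.half q.2) = p) ∨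
      ∃ q ∈ E₂, (e'.half q.1, e'.half q.2) = p := by
  simp only [glue, Finset.mem_union, Finset.mem_image, or_assoc, Prod.map_def]

theorem edgesBetween_self_ed : e.edgesBetween e G.ed = D.ed := by
  ext p
  rw [mem_edgesBetween, e.mem_ed]

theorem edgesBetween_mono {F : Finset (ℕ × ℕ)} (h : E ⊆ F) :
    e.edgesBetween e' E ⊆ e.edgesBetween e' F :=
  Finset.monotone_filter_right _ fun _ _ hp ↦ h hp

/-- The embedding `e`, after the edges of `G` have been replaced by `E`. -/
def withEdges (e : Embedding D G) (E : Finset (ℕ × ℕ)) :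
    Embedding (D.withEdges (e.edgesBetween e E)) (G.withEdges E) where
  __ := e
  mem_ed _ := mem_edgesBetween

theorem half_eq_half_iff (hk : k ∈ Finset.Icc 1 D.omega) (hl : l ∈ Finset.Icc 1 D.omega) :
    e.half k = e.half l ↔ k = l := e.strictMonoOn_half.injOn.eq_iff hk hl

theorem half_ne_half (h : Disjoint e.range e'.range) (hk : k ∈ Finset.Icc 1 D.omega)
    (hl : l ∈ Finset.Icc 1 D'.omega) : e.half k ≠ e'.half l := fun heq ↦
  Finset.disjoint_left.1 h (e.v_half_mem_range hk) (heq ▸ e'.v_half_mem_range hl)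

section Complement

variable (hc : e'.range = Finset.Icc 1 G.nv \ e.range)

include hc

theorem disjoint_range : Disjoint e.range e'.range := hc ▸ Finset.disjoint_sdiff

theorem exists_half_eq (hk : k ∈ Finset.Icc 1 G.omega) :
    (∃ a ∈ Finset.Icc 1 D.omega, e.half a = k) ∨ ∃ a ∈ Finset.Icc 1 D'.omega, e'.half a = k := by
  rw [← Finset.mem_image, ← Finset.mem_image, e.image_half, e'.image_half, mem_HI, mem_HI]
  by_cases h : G.v k ∈ e.range
  · exact Or.inl ⟨hk, h⟩
  · refine Or.inr ⟨hk, ?_⟩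
    change G.v k ∈ e'.range
    rw [hc]
    exact Finset.mem_sdiff.2 ⟨v_mem_Icc hk, h⟩

theorem glue_edgesBetween (hE : E ⊆ Finset.Icc 1 G.omega ×ˢ Finset.Icc 1 G.omega)
    (hE' : e'.edgesBetween e E = ∅) :
    e.glue e' (e.edgesBetween e E) (e'.edgesBetween e' E) (e.edgesBetween e' E) = E := by
  ext p
  rw [mem_glue]
  constructor
  · rintro (⟨q, hq, rfl⟩ | ⟨q, hq, rfl⟩ | ⟨q, hq, rfl⟩) <;> exact (mem_edgesBetween.1 hq).2
  · obtain ⟨k, l⟩ := p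
    intro hp
    obtain ⟨hk, hl⟩ := Finset.mem_product.1 (hE hp)
    obtain ⟨a, ha, rfl⟩ | ⟨a, ha, rfl⟩ := exists_half_eq hc hk <;>
      obtain ⟨b, hb, rfl⟩ | ⟨b, hb, rfl⟩ := exists_half_eq hc hl <;>
      have hab := mem_edgesBetween.2 ⟨Finset.mk_mem_product ha hb, hp⟩
    · exact Or.inl ⟨_, hab, rfl⟩
    · exact Or.inr (Or.inl ⟨_, hab, rfl⟩)
    · exact absurd hab (hE' ▸ Finset.notMem_empty _)
    · exact Or.inr (Or.inr ⟨_, hab, rfl⟩)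

end Complement

section Disjoint

variable (hd : Disjoint e.range e'.range)
  (hE₁ : E₁ ⊆ Finset.Icc 1 D.omega ×ˢ Finset.Icc 1 D.omega)
  (hE₂ : E₂ ⊆ Finset.Icc 1 D'.omega ×ˢ Finset.Icc 1 D'.omega)
  (hs : s ⊆ Finset.Icc 1 D.omega ×ˢ Finset.Icc 1 D'.omega)

include hd hE₁ hE₂ hs

theorem edgesBetween_glue_left : e.edgesBetween e (e.glue e' E₁ E₂ s) = E₁ := by
  have hne := @half_ne_half D D' G
  have heq := @half_eq_half_iff D G
  ext p
  simp only [mem_edgesBetween, mem_glue]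
  grind

theorem edgesBetween_glue_right : e'.edgesBetween e' (e.glue e' E₁ E₂ s) = E₂ := by
  have hne := @half_ne_half D D' G
  have heq := @half_eq_half_iff D' G
  ext p
  simp only [mem_edgesBetween, mem_glue]
  grind

theorem edgesBetween_glue : e.edgesBetween e' (e.glue e' E₁ E₂ s) = s := by
  have hne := @half_ne_half D D' G
  have heq := @half_eq_half_iff D G
  have heq' := @half_eq_half_iff D' G
  ext p
  simp only [mem_edgesBetween, mem_glue]
  grind

theorem edgesBetween_glue_swap : e'.edgesBetween e (e.glue e' E₁ E₂ s) = ∅ := by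
  have hne := @half_ne_half D D' G
  ext p
  simp only [mem_edgesBetween, mem_glue]
  grind

end Disjoint

theorem v_half_lt_v_half_iff (hk : k ∈ Finset.Icc 1 D.omega) (hl : l ∈ Finset.Icc 1 D.omega) :
    G.v (e.half k) < G.v (e.half l) ↔ D.v k < D.v l := by
  rw [e.v_half k hk, e.v_half l hl]
  exact e.strictMonoOn_vertex.lt_iff_lt (v_mem_Icc hk) (v_mem_Icc hl)

theorem valid_glue (hG : (G.withEdges ∅).Valid) (hd : Disjoint e.range e'.range)
    (hE₁ : (D.withEdges E₁).Valid) (hE₂ : (D'.withEdges E₂).Valid)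
    (hs : Matching (D.withEdges E₁) (D'.withEdges E₂) s)
    (hv : ∀ p ∈ s, G.v (e.half p.1) < G.v (e'.half p.2)) :
    (G.withEdges (e.glue e' E₁ E₂ s)).Valid := by
  have hlt := @v_half_lt_v_half_iff D G
  have hlt' := @v_half_lt_v_half_iff D' G
  have hne := @half_ne_half D D' G
  have heq := @half_eq_half_iff D G
  have heq' := @half_eq_half_iff D' G
  obtain ⟨hmem, hfst, hsnd⟩ := hs
  simp only [mem_HfUp_withEdges, mem_HfDn_withEdges, e.mem_up, e'.mem_dn] at hmem
  rw [valid_withEdges_iff] at hE₁ hE₂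
  simp only [e.mem_up, e'.mem_up, e.mem_dn, e'.mem_dn] at hE₁ hE₂
  obtain ⟨-, -, -, hed₁, hfst₁, hsnd₁⟩ := hE₁
  obtain ⟨-, -, -, hed₂, hfst₂, hsnd₂⟩ := hE₂
  refine valid_withEdges_iff.2 ⟨hG.1, hG.2.1, hG.2.2.1, ?_, ?_, ?_⟩ <;>
    simp only [mem_glue] <;> grind

theorem matching_edgesBetween (hE : (G.withEdges E).Valid) (hd : Disjoint e.range e'.range) :
    Matching (D.withEdges (e.edgesBetween e E)) (D'.withEdges (e'.edgesBetween e' E))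
      (e.edgesBetween e' E) := by
  obtain ⟨-, -, -, hed, hfst, hsnd⟩ := valid_withEdges_iff.1 hE
  have hne := @half_ne_half D D' G
  have heq := @half_eq_half_iff D G
  have heq' := @half_eq_half_iff D' G
  simp only [Matching, mem_HfUp_withEdges, mem_HfDn_withEdges, mem_edgesBetween, e.mem_up,
    e'.mem_dn, Prod.map_def, Finset.mem_product]
  refine ⟨?_, ?_, ?_⟩ <;> grind

end Embedding

end Glue

section Juxtaposition

variable {A B : BD} {I J : Finset ℕ} {E₁ E₂ s : Finset (ℕ × ℕ)}

theorem comp_withEdges (hA : A.Valid) (hB : B.Valid) :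
    comp (A.withEdges E₁) (B.withEdges E₂) s =
      (juxt A B).withEdges ((juxtLeft hA hB).glue (juxtRight hA hB) E₁ E₂ s) :=
  ext rfl rfl rfl (by
    rw [comp, withEdges, Embedding.glue, juxtLeft, juxtRight]
    simp only [withEdges, Prod.map_def, Finset.image_id', omega])

theorem valid_juxt_withEdges_empty (hA : A.Valid) (hB : B.Valid) :
    ((juxt A B).withEdges ∅).Valid := by
  have subset_Icc {X Y : Finset ℕ} (hX : X ⊆ Finset.Icc 1 A.omega)
      (hY : Y ⊆ Finset.Icc 1 B.omega) :
      X ∪ Y.image (· + A.omega) ⊆ Finset.Icc 1 (juxt A B).omega := by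
    refine Finset.union_subset (fun k hk ↦ ?_) (Finset.image_subset_iff.2 fun k hk ↦ ?_)
    · exact omega_juxt A B ▸ mem_Icc_one_add_iff.2 (Or.inl (hX hk))
    · exact omega_juxt A B ▸ mem_Icc_one_add_iff.2 (Or.inr ⟨k, hY hk, rfl⟩)
  refine valid_withEdges_iff.2 ⟨fun x hx ↦ ?_, subset_Icc hA.2.1 hB.2.1,
    subset_Icc hA.2.2.1 hB.2.2.1, by simp only [Finset.notMem_empty, false_imp_iff, implies_true],
    by simp only [Finset.notMem_empty, false_imp_iff, implies_true],
    by simp only [Finset.notMem_empty, false_imp_iff, implies_true]⟩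
  obtain hx | hx := List.mem_append.1 hx
  · exact hA.1 x hx
  · exact hB.1 x hx

theorem lt_of_mem_range_juxt (hA : A.Valid) (hB : B.Valid) :
    ∀ i ∈ (juxtLeft hA hB).range, ∀ j ∈ (juxtRight hA hB).range, i < j := by
  intro i hi j hj
  rw [range_juxtRight, range_juxtLeft, Finset.mem_sdiff, Finset.mem_Icc, Finset.mem_Icc] at hj
  rw [range_juxtLeft, Finset.mem_Icc] at hi
  omega

theorem matching_empty : Matching A B ∅ := by
  simp only [Matching, Finset.notMem_empty, false_imp_iff, implies_true, and_self]

theorem Valid.comp (hA : A.Valid) (hB : B.Valid) (hs : Matching A B s) : (comp A B s).Valid := by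
  rw [show BD.comp A B s = _ from comp_withEdges (E₁ := A.ed) (E₂ := B.ed) hA hB]
  refine Embedding.valid_glue (valid_juxt_withEdges_empty hA hB)
    (Embedding.disjoint_range (range_juxtRight hA hB)) hA hB hs fun p hp ↦ ?_
  obtain ⟨hp₁, hp₂⟩ := Finset.mem_product.1 (hs.mem_Icc hA.2.1 hB.2.2.1 hp)
  exact lt_of_mem_range_juxt hA hB _ ((juxtLeft hA hB).v_half_mem_range hp₁) _
    ((juxtRight hA hB).v_half_mem_range hp₂)

theorem Valid.juxt (hA : A.Valid) (hB : B.Valid) : (juxt A B).Valid := hA.comp hB matching_empty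

theorem eps_juxt (A : BD) : BD.juxt eps A = A := by
  simp [BD.juxt, BD.comp, eps, omega]

theorem juxt_eps (A : BD) : BD.juxt A eps = A := by
  simp [BD.juxt, BD.comp, eps]

theorem juxt_assoc (A B C : BD) : BD.juxt (BD.juxt A B) C = BD.juxt A (BD.juxt B C) := by
  simp [BD.juxt, BD.comp, omega, Finset.image_union, Finset.image_image, Function.comp_def,
    Finset.union_assoc, ← add_assoc, add_right_comm]

theorem Valid.eq_eps_of_nv_eq_zero (hA : A.Valid) (h : A.nv = 0) : A = eps := by
  have hlam : A.lam = [] := List.length_eq_zero_iff.1 h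
  have homega : A.omega = 0 := by rw [omega, hlam, List.sum_nil]
  have hed : A.ed ⊆ _ := fun _ ↦ hA.mem_Icc_of_mem_ed
  rw [homega] at hed
  have hup := hA.2.1
  have hdn := hA.2.2.1
  rw [homega] at hup hdn
  exact ext hlam (Finset.subset_empty.1 hup) (Finset.subset_empty.1 hdn) (Finset.subset_empty.1 hed)

theorem isolated_range_juxtLeft (hA : A.Valid) (hB : B.Valid) :
    (juxt A B).Isolated (juxtLeft hA hB).range := by
  have hdisj := Finset.disjoint_left.1 (Embedding.disjoint_range (range_juxtRight hA hB))
  intro p hp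
  obtain hp | ⟨p, hq, rfl⟩ := mem_juxt_ed.1 hp
  · obtain ⟨hp₁, hp₂⟩ := Finset.mem_product.1 (hA.mem_Icc_of_mem_ed hp)
    exact iff_of_true ((juxtLeft hA hB).v_half_mem_range hp₁)
      ((juxtLeft hA hB).v_half_mem_range hp₂)
  · obtain ⟨hp₁, hp₂⟩ := Finset.mem_product.1 (hB.mem_Icc_of_mem_ed hq)
    exact iff_of_false (fun h ↦ hdisj h ((juxtRight hA hB).v_half_mem_range hp₁))
      fun h ↦ hdisj h ((juxtRight hA hB).v_half_mem_range hp₂)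

theorem sub_juxt (hA : A.Valid) (hB : B.Valid) (hI : I ⊆ Finset.Icc 1 A.nv)
    (hJ : J ⊆ Finset.Icc 1 B.nv) (hiso : A.Isolated I) :
    (juxt A B).sub (I.image (juxtLeft hA hB).vertex ∪ J.image (juxtRight hA hB).vertex) =
      juxt (A.sub I) (B.sub J) := by
  have hG := hA.juxt hB
  set e := (subEmbedding hA hI).trans (juxtLeft hA hB)
  set e' := (subEmbedding hB hJ).trans (juxtRight hA hB)
  have he : e.range = I.image (juxtLeft hA hB).vertex := by
    rw [Embedding.range_trans, range_subEmbedding]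
  have he' : e'.range = J.image (juxtRight hA hB).vertex := by
    rw [Embedding.range_trans, range_subEmbedding]
  have hlt : ∀ i ∈ e.range, ∀ j ∈ e'.range, i < j := by
    rw [he, he']
    exact fun i hi j hj ↦ lt_of_mem_range_juxt hA hB
      i (Embedding.image_vertex_subset_range _ hI hi)
      j (Embedding.image_vertex_subset_range _ hJ hj)
  have hiso' : (BD.juxt A B).Isolated e.range := by
    rw [he, Embedding.isolated_image_iff _ hG (isolated_range_juxtLeft hA hB) hI]
    exact hiso
  rw [← he, ← he', ← Embedding.range_copair e e' hlt hiso', Embedding.sub_range _ hG]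

end Juxtaposition

/-! ### Freeness of the juxtaposition monoid -/

section Factorisation

variable {A B C D : BD}

theorem Valid.isolated_Icc (hA : A.Valid) : A.Isolated (Finset.Icc 1 A.nv) := fun _ hp ↦
  iff_of_true (v_mem_Icc (Finset.mem_product.1 (hA.mem_Icc_of_mem_ed hp)).1)
    (v_mem_Icc (Finset.mem_product.1 (hA.mem_Icc_of_mem_ed hp)).2)

theorem sub_Icc_juxt (hA : A.Valid) (hB : B.Valid) : (juxt A B).sub (Finset.Icc 1 A.nv) = A := by
  rw [← range_juxtLeft hA hB, Embedding.sub_range _ (hA.juxt hB)]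

theorem Valid.sub_Icc (hA : A.Valid) : A.sub (Finset.Icc 1 A.nv) = A := by
  conv_rhs => rw [← sub_Icc_juxt hA eps_valid]
  rw [juxt_eps]

theorem juxt_left_cancel (hA : A.Valid) (hB : B.Valid) (hC : C.Valid)
    (h : juxt A B = juxt A C) : B = C := by
  rw [← (juxtRight hA hB).sub_range (hA.juxt hB), ← (juxtRight hA hC).sub_range (hA.juxt hC),
    range_juxtRight, range_juxtRight, range_juxtLeft, range_juxtLeft, h]

theorem exists_eq_juxt_of_juxt_eq_juxt (hA : A.Valid) (hB : B.Valid) (hC : C.Valid) (hD : D.Valid)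
    (h : juxt A B = juxt C D) (hle : A.nv ≤ C.nv) :
    ∃ M : BD, M.Valid ∧ C = juxt A M ∧ B = juxt M D := by
  have hnv : A.nv + B.nv = C.nv + D.nv := by rw [← nv_juxt, ← nv_juxt, h]
  obtain ⟨k, hk⟩ := Nat.exists_eq_add_of_le' hle
  have hkB : Finset.Icc 1 k ⊆ Finset.Icc 1 B.nv := Finset.Icc_subset_Icc_right (by omega)
  have hIcc : Finset.Icc 1 C.nv = (Finset.Icc 1 A.nv).image (juxtLeft hA hB).vertex ∪
      (Finset.Icc 1 k).image (juxtRight hA hB).vertex := by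
    ext i
    rw [hk, add_comm, mem_Icc_one_add_iff, Finset.mem_union, Finset.mem_image, Finset.mem_image]
    simp only [juxtLeft_vertex, exists_eq_right, juxtRight_vertex]
  have hC_eq : C = juxt A (B.sub (Finset.Icc 1 k)) := by
    rw [← sub_Icc_juxt hC hD, ← h, hIcc, sub_juxt hA hB subset_rfl hkB hA.isolated_Icc, hA.sub_Icc]
  have hM := hB.sub hkB
  refine ⟨_, hM, hC_eq, juxt_left_cancel hA hB (hM.juxt hD) ?_⟩
  rw [h, ← juxt_assoc, ← hC_eq]

end Factorisation

end BD

section Monoid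

/-- The monoid of B-diagrams under juxtaposition. -/
instance : Monoid BDiagram where
  mul A B := ⟨BD.juxt A.1 B.1, A.2.juxt B.2⟩
  one := ⟨BD.eps, BD.eps_valid⟩
  mul_assoc _ _ _ := Subtype.ext (BD.juxt_assoc _ _ _)
  one_mul _ := Subtype.ext (BD.eps_juxt _)
  mul_one _ := Subtype.ext (BD.juxt_eps _)

namespace BDiagram

theorem coe_mul (A B : BDiagram) : (A * B).1 = BD.juxt A.1 B.1 := rfl

theorem coe_one : (1 : BDiagram).1 = BD.eps := rfl

theorem nv_mul (A B : BDiagram) : (A * B).1.nv = A.1.nv + B.1.nv := BD.nv_juxt _ _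

theorem eq_one_of_nv_eq_zero (A : BDiagram) (h : A.1.nv = 0) : A = 1 :=
  Subtype.ext (A.2.eq_eps_of_nv_eq_zero h)

theorem equidivisible : Equidivisible BDiagram := by
  intro A B C D h
  have h := congrArg Subtype.val h
  obtain hle | hle := le_total A.1.nv C.1.nv
  · obtain ⟨M, hM, hC, hB⟩ := BD.exists_eq_juxt_of_juxt_eq_juxt A.2 B.2 C.2 D.2 h hle
    exact Or.inl ⟨⟨M, hM⟩, Subtype.ext hC, Subtype.ext hB⟩
  · obtain ⟨M, hM, hA, hD⟩ := BD.exists_eq_juxt_of_juxt_eq_juxt C.2 D.2 A.2 B.2 h.symm hle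
    exact Or.inr ⟨⟨M, hM⟩, Subtype.ext hA, Subtype.ext hD⟩

theorem isUnit_iff {A : BDiagram} : IsUnit A ↔ A = 1 :=
  isUnit_iff_eq_one_of_deg (deg := fun A : BDiagram ↦ A.1.nv) nv_mul eq_one_of_nv_eq_zero

theorem mul_eq_left_iff {A B : BDiagram} : A * B = A ↔ B = 1 := by
  refine ⟨fun h ↦ eq_one_of_nv_eq_zero B ?_, fun h ↦ h ▸ mul_one A⟩
  have := nv_mul A B
  rw [h] at this
  omega

theorem mul_eq_right_iff {A B : BDiagram} : A * B = B ↔ A = 1 := by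
  refine ⟨fun h ↦ eq_one_of_nv_eq_zero A ?_, fun h ↦ h ▸ one_mul B⟩
  have := nv_mul A B
  rw [h] at this
  omega

theorem irreducible_iff_indiv {A : BDiagram} : Irreducible A ↔ A.1 ≠ BD.eps ∧ A.1.Indiv := by
  have units_iff {B C : BDiagram} (h : A = B * C) : IsUnit B ∨ IsUnit C ↔ B = A ∨ C = A := by
    rw [h, isUnit_iff, isUnit_iff, eq_comm (b := B * C), eq_comm (b := B * C),
      mul_eq_left_iff, mul_eq_right_iff, or_comm]
  rw [irreducible_iff, isUnit_iff]
  refine and_congr Subtype.ext_iff.not ⟨fun h B C hB hC hA ↦ ?_, fun h B C hA ↦ ?_⟩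
  · have hA' : A = (⟨B, hB⟩ : BDiagram) * ⟨C, hC⟩ := Subtype.ext hA
    exact ((units_iff hA').1 (h hA')).imp (congrArg Subtype.val) (congrArg Subtype.val)
  · have hindiv := h B.1 C.1 B.2 C.2 (congrArg Subtype.val hA)
    exact (units_iff hA).2 (hindiv.imp Subtype.ext Subtype.ext)

theorem lift_indiv_bijective :
    Function.Bijective (FreeMonoid.lift fun g : GSet ↦ g.1) := by
  refine freeMonoid_lift_bijective (deg := fun A : BDiagram ↦ A.1.nv) equidivisible nv_mul
    eq_one_of_nv_eq_zero Subtype.val_injective ?_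
  exact Subtype.range_val.trans (Set.ext fun A ↦ irreducible_iff_indiv.symm)

end BDiagram

end Monoid

/-! ### The coproduct -/

namespace BD

section Isolated

variable {D D' G : BD} {I J : Finset ℕ}

theorem Isolated.union (hI : G.Isolated I) (hJ : G.Isolated J) : G.Isolated (I ∪ J) := fun p hp ↦ by
  rw [Finset.mem_union, Finset.mem_union, hI p hp, hJ p hp]

theorem Isolated.inter (hI : G.Isolated I) (hJ : G.Isolated J) : G.Isolated (I ∩ J) := fun p hp ↦ by
  rw [Finset.mem_inter, Finset.mem_inter, hI p hp, hJ p hp]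

theorem Isolated.sdiff (hI : G.Isolated I) (hJ : G.Isolated J) : G.Isolated (I \ J) := fun p hp ↦ by
  rw [Finset.mem_sdiff, Finset.mem_sdiff, hI p hp, hJ p hp]

open scoped Classical in
/-- The finite set of all isolated sets of vertices of `G`. -/
noncomputable def isolatedSets (G : BD) : Finset (Finset ℕ) :=
  (Finset.Icc 1 G.nv).powerset.filter (fun I ↦ G.Isolated I)

theorem mem_isolatedSets : I ∈ G.isolatedSets ↔ I ⊆ Finset.Icc 1 G.nv ∧ G.Isolated I := by
  simp only [isolatedSets, Finset.mem_filter, Finset.mem_powerset]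

namespace Embedding

/-- The set of vertices of `D` that the embedding sends into `K`. -/
def vertexPreimage (e : Embedding D G) (K : Finset ℕ) : Finset ℕ :=
  {i ∈ Finset.Icc 1 D.nv | e.vertex i ∈ K}

theorem vertexPreimage_subset (e : Embedding D G) (K : Finset ℕ) :
    e.vertexPreimage K ⊆ Finset.Icc 1 D.nv := Finset.filter_subset _ _

theorem image_vertexPreimage (e : Embedding D G) (K : Finset ℕ) :
    (e.vertexPreimage K).image e.vertex = K ∩ e.range := by
  ext j
  simp only [vertexPreimage, range, Finset.mem_image, Finset.mem_filter, Finset.mem_inter]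
  grind

theorem vertexPreimage_image (e : Embedding D G) (hI : I ⊆ Finset.Icc 1 D.nv) :
    e.vertexPreimage (I.image e.vertex) = I := by
  ext i
  rw [vertexPreimage, Finset.mem_filter]
  exact ⟨fun h ↦ (e.vertex_mem_image_iff hI h.1).1 h.2,
    fun h ↦ ⟨hI h, Finset.mem_image_of_mem _ h⟩⟩

theorem image_sdiff_vertex (e : Embedding D G) (hI : I ⊆ Finset.Icc 1 D.nv) :
    (Finset.Icc 1 D.nv \ I).image e.vertex = e.range \ I.image e.vertex :=
  Finset.image_sdiff_of_injOn e.strictMonoOn_vertex.injOn hI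

theorem vertexPreimage_union (e : Embedding D G) (K L : Finset ℕ) :
    e.vertexPreimage (K ∪ L) = e.vertexPreimage K ∪ e.vertexPreimage L := by
  simp only [vertexPreimage, Finset.mem_union, Finset.filter_or]

theorem vertexPreimage_of_disjoint (e : Embedding D G) {K : Finset ℕ} (h : Disjoint K e.range) :
    e.vertexPreimage K = ∅ := by
  rw [← Finset.image_eq_empty (f := e.vertex), image_vertexPreimage]
  exact Finset.disjoint_iff_inter_eq_empty.1 h

theorem sum_isolatedSets_filter_subset_range {M : Type*} [AddCommMonoid M] (e : Embedding D G)
    (hG : G.Valid) (hiso : G.Isolated e.range) (f : Finset ℕ → M) :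
    ∑ K ∈ G.isolatedSets with K ⊆ e.range, f K = ∑ I ∈ D.isolatedSets, f (I.image e.vertex) := by
  refine (Finset.sum_bij' (fun I _ ↦ I.image e.vertex) (fun K _ ↦ e.vertexPreimage K)
    (fun I hI ↦ ?_) (fun K hK ↦ ?_) (fun I hI ↦ ?_) (fun K hK ↦ ?_) fun _ _ ↦ rfl).symm
  · obtain ⟨hI, hisoI⟩ := mem_isolatedSets.1 hI
    have hrange := e.image_vertex_subset_range hI
    rw [Finset.mem_filter, mem_isolatedSets, e.isolated_image_iff hG hiso hI]
    exact ⟨⟨hrange.trans e.range_subset, hisoI⟩, hrange⟩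
  · obtain ⟨hK, hrange⟩ := Finset.mem_filter.1 hK
    rw [mem_isolatedSets, ← e.isolated_image_iff hG hiso (e.vertexPreimage_subset K),
      image_vertexPreimage, Finset.inter_eq_left.2 hrange]
    exact ⟨e.vertexPreimage_subset K, (mem_isolatedSets.1 hK).2⟩
  · exact e.vertexPreimage_image (mem_isolatedSets.1 hI).1
  · rw [image_vertexPreimage, Finset.inter_eq_left.2 (Finset.mem_filter.1 hK).2]

section Complement

variable {e : Embedding D G} {e' : Embedding D' G} (hc : e'.range = Finset.Icc 1 G.nv \ e.range)

include hc

theorem sdiff_image_union_image (hI : I ⊆ Finset.Icc 1 D.nv) (hJ : J ⊆ Finset.Icc 1 D'.nv) :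
    Finset.Icc 1 G.nv \ (I.image e.vertex ∪ J.image e'.vertex) =
      (Finset.Icc 1 D.nv \ I).image e.vertex ∪ (Finset.Icc 1 D'.nv \ J).image e'.vertex := by
  have hrange : Finset.Icc 1 G.nv = e.range ∪ e'.range := by
    rw [hc, Finset.union_sdiff_of_subset e.range_subset]
  have hdisj : Disjoint e.range e'.range := disjoint_range hc
  have hI_disj : Disjoint e'.range (I.image e.vertex) :=
    hdisj.symm.mono_right (e.image_vertex_subset_range hI)
  have hJ_disj : Disjoint e.range (J.image e'.vertex) :=
    hdisj.mono_right (e'.image_vertex_subset_range hJ)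
  rw [hrange, Finset.union_sdiff_distrib, Finset.sdiff_union_distrib, Finset.sdiff_union_distrib,
    hI_disj.sdiff_eq_left, hJ_disj.sdiff_eq_left, e.image_sdiff_vertex hI,
    e'.image_sdiff_vertex hJ, Finset.inter_eq_left.2 Finset.sdiff_subset,
    Finset.inter_eq_right.2 Finset.sdiff_subset]

theorem sum_isolatedSets_eq_sum_product {M : Type*} [AddCommMonoid M] (hG : G.Valid)
    (hiso : G.Isolated e.range) (f : Finset ℕ → M) :
    ∑ K ∈ G.isolatedSets, f K =
      ∑ p ∈ D.isolatedSets ×ˢ D'.isolatedSets, f (p.1.image e.vertex ∪ p.2.image e'.vertex) := by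
  have hdisj : Disjoint e.range e'.range := disjoint_range hc
  have hiso' : G.Isolated e'.range := hc ▸ hG.isolated_Icc.sdiff hiso
  refine (Finset.sum_bij' (fun p _ ↦ p.1.image e.vertex ∪ p.2.image e'.vertex)
    (fun K _ ↦ (e.vertexPreimage K, e'.vertexPreimage K)) (fun p hp ↦ ?_) (fun K hK ↦ ?_)
    (fun p hp ↦ ?_) (fun K hK ↦ ?_) fun _ _ ↦ rfl).symm
  all_goals simp only [Finset.mem_product, mem_isolatedSets] at *
  · obtain ⟨⟨hI, hisoI⟩, hJ, hisoJ⟩ := hp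
    refine ⟨Finset.union_subset ((e.image_vertex_subset_range hI).trans e.range_subset)
      ((e'.image_vertex_subset_range hJ).trans e'.range_subset), ?_⟩
    exact ((e.isolated_image_iff hG hiso hI).2 hisoI).union
      ((e'.isolated_image_iff hG hiso' hJ).2 hisoJ)
  · rw [← e.isolated_image_iff hG hiso (e.vertexPreimage_subset K), image_vertexPreimage,
      ← e'.isolated_image_iff hG hiso' (e'.vertexPreimage_subset K), image_vertexPreimage]
    exact ⟨⟨e.vertexPreimage_subset K, hK.2.inter hiso⟩, e'.vertexPreimage_subset K,
      hK.2.inter hiso'⟩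
  · obtain ⟨⟨hI, -⟩, hJ, -⟩ := hp
    have hI_disj : Disjoint (p.1.image e.vertex) e'.range :=
      hdisj.mono_left (e.image_vertex_subset_range hI)
    have hJ_disj : Disjoint (p.2.image e'.vertex) e.range :=
      hdisj.symm.mono_left (e'.image_vertex_subset_range hJ)
    rw [vertexPreimage_union, vertexPreimage_union, vertexPreimage_image _ hI,
      vertexPreimage_image _ hJ, vertexPreimage_of_disjoint _ hI_disj,
      vertexPreimage_of_disjoint _ hJ_disj, Finset.union_empty, Finset.empty_union]
  · rw [image_vertexPreimage, image_vertexPreimage, ← Finset.inter_union_distrib_left, hc,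
      Finset.union_sdiff_of_subset e.range_subset, Finset.inter_eq_left.2 hK.1]

end Complement

end Embedding

end Isolated

end BD

section Coproduct

namespace BDiagram

/-- The sub-B-diagram on the vertices of `A` that lie in `I`. -/
def sub (A : BDiagram) (I : Finset ℕ) : BDiagram :=
  ⟨A.1.sub (Finset.Icc 1 A.1.nv ∩ I), A.2.sub Finset.inter_subset_left⟩

variable {A B : BDiagram} {I J : Finset ℕ}

theorem coe_sub (hI : I ⊆ Finset.Icc 1 A.1.nv) : (A.sub I).1 = A.1.sub I :=
  congrArg A.1.sub (Finset.inter_eq_right.2 hI)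

theorem sub_empty (A : BDiagram) : A.sub ∅ = 1 :=
  eq_one_of_nv_eq_zero _ (by rw [coe_sub (Finset.empty_subset _),
    BD.nv_sub (Finset.empty_subset _), Finset.card_empty])

theorem sub_Icc (A : BDiagram) : A.sub (Finset.Icc 1 A.1.nv) = A :=
  Subtype.ext (by rw [coe_sub subset_rfl, A.2.sub_Icc])

theorem sub_image_vertex (e : BD.Embedding B.1 A.1) (hI : I ⊆ Finset.Icc 1 B.1.nv) :
    A.sub (I.image e.vertex) = B.sub I :=
  Subtype.ext (by
    rw [coe_sub ((e.image_vertex_subset_range hI).trans e.range_subset), coe_sub hI,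
      e.sub_image_vertex A.2 hI])

theorem sub_mul (hI : I ⊆ Finset.Icc 1 A.1.nv) (hJ : J ⊆ Finset.Icc 1 B.1.nv)
    (hiso : A.1.Isolated I) :
    (A * B).sub (I.image (BD.juxtLeft A.2 B.2).vertex ∪ J.image (BD.juxtRight A.2 B.2).vertex) =
      A.sub I * B.sub J := by
  refine Subtype.ext ?_
  rw [coe_sub, coe_mul, BD.sub_juxt A.2 B.2 hI hJ hiso, coe_mul, coe_sub hI, coe_sub hJ]
  exact Finset.union_subset
    ((BD.Embedding.image_vertex_subset_range _ hI).trans (BD.Embedding.range_subset _))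
    ((BD.Embedding.image_vertex_subset_range _ hJ).trans (BD.Embedding.range_subset _))

open MonoidAlgebra (of)

/-- The coproduct of the single B-diagram `A`, over `ℂ[BDiagram]`. -/
noncomputable def comulBasis (A : BDiagram) :
    MonoidAlgebra ℂ BDiagram ⊗[ℂ] MonoidAlgebra ℂ BDiagram :=
  ∑ I ∈ A.1.isolatedSets, of ℂ _ (A.sub I) ⊗ₜ[ℂ] of ℂ _ (A.sub (Finset.Icc 1 A.1.nv \ I))

theorem comulBasis_one : comulBasis 1 = 1 := by
  have hS : (1 : BDiagram).1.isolatedSets = {∅} := by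
    ext I
    rw [BD.mem_isolatedSets, Finset.mem_singleton]
    constructor
    · exact fun h ↦ Finset.subset_empty.1 h.1
    · rintro rfl
      exact ⟨Finset.empty_subset _, fun p hp ↦ absurd hp (Finset.notMem_empty p)⟩
  rw [comulBasis, hS, Finset.sum_singleton, Finset.sdiff_empty, sub_empty, sub_Icc, map_one,
    Algebra.TensorProduct.one_def]

theorem comulBasis_mul (A B : BDiagram) : comulBasis (A * B) = comulBasis A * comulBasis B := by
  have hc := BD.range_juxtRight A.2 B.2
  rw [comulBasis, coe_mul, BD.Embedding.sum_isolatedSets_eq_sum_product hc (A * B).2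
    (BD.isolated_range_juxtLeft A.2 B.2), comulBasis, comulBasis, Finset.sum_mul_sum,
    ← Finset.sum_product']
  refine Finset.sum_congr rfl fun ⟨I, J⟩ hIJ ↦ ?_
  simp only [Finset.mem_product, BD.mem_isolatedSets] at hIJ
  obtain ⟨⟨hI, hisoI⟩, hJ, -⟩ := hIJ
  have hisoI' := A.2.isolated_Icc.sdiff hisoI
  rw [BD.Embedding.sdiff_image_union_image hc hI hJ, sub_mul hI hJ hisoI,
    sub_mul Finset.sdiff_subset Finset.sdiff_subset hisoI', map_mul, map_mul,
    Algebra.TensorProduct.tmul_mul_tmul]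

/-- The coproduct as an algebra morphism, for the product of `ℂ[BDiagram]` given by
juxtaposition. -/
noncomputable def comul : MonoidAlgebra ℂ BDiagram →ₐ[ℂ]
    MonoidAlgebra ℂ BDiagram ⊗[ℂ] MonoidAlgebra ℂ BDiagram :=
  MonoidAlgebra.lift ℂ _ BDiagram
    { toFun := comulBasis
      map_one' := comulBasis_one
      map_mul' := comulBasis_mul }

theorem comul_of (A : BDiagram) : comul (of ℂ _ A) = comulBasis A := MonoidAlgebra.lift_of ..

theorem comulBasis_eq_sum (e : BD.Embedding B.1 A.1) (hiso : A.1.Isolated e.range) :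
    comulBasis B = ∑ I ∈ A.1.isolatedSets with I ⊆ e.range,
      of ℂ _ (A.sub I) ⊗ₜ[ℂ] of ℂ _ (A.sub (e.range \ I)) := by
  rw [e.sum_isolatedSets_filter_subset_range A.2 hiso, comulBasis]
  refine Finset.sum_congr rfl fun I hI ↦ ?_
  have hI := (BD.mem_isolatedSets.1 hI).1
  rw [← e.image_sdiff_vertex hI, sub_image_vertex e hI, sub_image_vertex e Finset.sdiff_subset]

theorem isComultiplicative_sub (A : BDiagram) :
    IsComultiplicative comul A.1.isolatedSets (fun I ↦ of ℂ _ (A.sub I)) where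
  map_empty := by rw [sub_empty, map_one]
  sdiff_mem I hI J hJ := by
    rw [BD.mem_isolatedSets] at *
    exact ⟨Finset.sdiff_subset.trans hI.1, hI.2.sdiff hJ.2⟩
  union_mem I hI J hJ := by
    rw [BD.mem_isolatedSets] at *
    exact ⟨Finset.union_subset hI.1 hJ.1, hI.2.union hJ.2⟩
  comul I hI := by
    obtain ⟨hI, hiso⟩ := BD.mem_isolatedSets.1 hI
    let e : BD.Embedding (A.sub I).1 A.1 := BD.subEmbedding A.2 Finset.inter_subset_left
    have he : e.range = I :=
      (BD.range_subEmbedding A.2 _).trans (Finset.inter_eq_right.2 hI)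
    rw [comul_of, comulBasis_eq_sum e (he.symm ▸ hiso), he]

end BDiagram

end Coproduct

/-! ### Triangular perturbations of free generators -/

section Perturbation

open MonoidAlgebra (of)
open scoped Pointwise

variable {R X M : Type*} [CommRing R] [Monoid M] {g : X → M} {p : X → MonoidAlgebra R M}

theorem span_of_image_mul (s t : Set M) :
    Submodule.span R (of R M '' s) * Submodule.span R (of R M '' t) =
      Submodule.span R (of R M '' (s * t)) := by
  rw [Submodule.span_mul_span, ← Set.image_mul]

theorem span_of_image_mono {s t : Set M} (h : s ⊆ t) :
    Submodule.span R (of R M '' s) ≤ Submodule.span R (of R M '' t) :=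
  Submodule.span_mono (Set.image_mono h)

theorem of_mem_span_of_image {s : Set M} {a : M} (h : a ∈ s) :
    of R M a ∈ Submodule.span R (of R M '' s) :=
  Submodule.subset_span (Set.mem_image_of_mem _ h)

section Weight

variable {weight : FreeMonoid X → ℕ}

/-- The span of the products `g x₁ ⋯ g xₙ` over the words `x₁ ⋯ xₙ` whose weight satisfies `P`. -/
noncomputable def weightSpan (R : Type*) [CommRing R] (g : X → M) (weight : FreeMonoid X → ℕ)
    (P : ℕ → Prop) : Submodule R (MonoidAlgebra R M) :=
  Submodule.span R (of R M '' (FreeMonoid.lift g '' {w | P (weight w)}))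

theorem weightSpan_mono {P Q : ℕ → Prop} (h : ∀ i, P i → Q i) :
    weightSpan R g weight P ≤ weightSpan R g weight Q :=
  span_of_image_mono (Set.image_mono fun _ ↦ h _)

theorem mul_mem_weightSpan (weight_mul : ∀ u v, weight (u * v) = weight u + weight v)
    {P Q T : ℕ → Prop} (h : ∀ i j, P i → Q j → T (i + j)) {a b : MonoidAlgebra R M}
    (ha : a ∈ weightSpan R g weight P) (hb : b ∈ weightSpan R g weight Q) :
    a * b ∈ weightSpan R g weight T := by
  have hab := Submodule.mul_mem_mul ha hb
  rw [weightSpan, weightSpan, span_of_image_mul, ← Set.image_mul] at hab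
  refine span_of_image_mono (Set.image_mono ?_) hab
  rintro _ ⟨u, hu, v, hv, rfl⟩
  change T (weight (u * v))
  exact weight_mul u v ▸ h _ _ hu hv

theorem of_lift_mem_weightSpan {P : ℕ → Prop} {w : FreeMonoid X} (h : P (weight w)) :
    of R M (FreeMonoid.lift g w) ∈ weightSpan R g weight P :=
  of_mem_span_of_image ⟨w, h, rfl⟩

theorem lift_sub_of_lift_mem_weightSpan
    (weight_mul : ∀ u v, weight (u * v) = weight u + weight v)
    (hp : ∀ x, p x - of R M (g x) ∈ weightSpan R g weight (· < weight (.of x)))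
    (w : FreeMonoid X) :
    FreeMonoid.lift p w - of R M (FreeMonoid.lift g w) ∈
      weightSpan R g weight (· < weight w) := by
  induction w using FreeMonoid.inductionOn' with
  | one =>
    rw [map_one, map_one, map_one, sub_self]
    exact zero_mem _
  | of_mul x w ih =>
    have hx : p x ∈ weightSpan R g weight (· ≤ weight (.of x)) := by
      rw [← sub_add_cancel (p x) (of R M (g x))]
      exact add_mem (weightSpan_mono (fun _ ↦ le_of_lt) (hp x))
        (of_lift_mem_weightSpan (w := .of x) le_rfl)
    have hw : of R M (FreeMonoid.lift g w) ∈ weightSpan R g weight (· ≤ weight w) :=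
      of_lift_mem_weightSpan le_rfl
    have hsplit : p x * FreeMonoid.lift p w - of R M (g x) * of R M (FreeMonoid.lift g w) =
        p x * (FreeMonoid.lift p w - of R M (FreeMonoid.lift g w)) +
          (p x - of R M (g x)) * of R M (FreeMonoid.lift g w) := by
      rw [mul_sub, sub_mul, sub_add_sub_cancel]
    rw [map_mul, map_mul, map_mul, FreeMonoid.lift_eval_of, FreeMonoid.lift_eval_of, weight_mul,
      hsplit]
    exact add_mem (mul_mem_weightSpan weight_mul (fun _ _ ↦ add_lt_add_of_le_of_lt) hx ih)
      (mul_mem_weightSpan weight_mul (fun _ _ ↦ add_lt_add_of_lt_of_le) (hp x) hw)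

theorem freeAlgebra_lift_bijective_of_weight (hg : Function.Bijective (FreeMonoid.lift g))
    (weight_mul : ∀ u v, weight (u * v) = weight u + weight v)
    (hp : ∀ x, p x - of R M (g x) ∈ weightSpan R g weight (· < weight (.of x))) :
    Function.Bijective (FreeAlgebra.lift R p) := by
  let c : Module.Basis (FreeMonoid X) R (MonoidAlgebra R M) :=
    (Module.Basis.ofRepr (MonoidAlgebra.coeffLinearEquiv R)).reindex (Equiv.ofBijective _ hg).symm
  have hc (w : FreeMonoid X) : c w = of R M (FreeMonoid.lift g w) :=
    (Module.Basis.reindex_apply ..).trans rfl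
  refine bijective_of_unitriangular (b := FreeAlgebra.basisFreeMonoid R X) (c := c)
    (T := (FreeAlgebra.lift R p).toLinearMap) (ρ := weight) fun w ↦ ?_
  have hlift : FreeAlgebra.lift R p (FreeMonoid.lift (FreeAlgebra.ι R) w) =
      FreeMonoid.lift p w := by
    have h := FreeMonoid.hom_map_lift (FreeAlgebra.lift R p).toMonoidHom (FreeAlgebra.ι R) w
    simpa [Function.comp_def, FreeAlgebra.lift_ι_apply] using h
  have himage (s : Set (FreeMonoid X)) : c '' s = of R M '' (FreeMonoid.lift g '' s) := by
    rw [Set.image_image]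
    exact Set.image_congr fun w _ ↦ hc w
  rw [AlgHom.toLinearMap_apply, basisFreeMonoid_apply, hlift, hc, himage]
  exact lift_sub_of_lift_mem_weightSpan weight_mul hp w

end Weight

theorem freeAlgebra_lift_bijective_of_decomposable (hg : Function.Bijective (FreeMonoid.lift g))
    {deg : M → ℕ} (deg_mul : ∀ a b, deg (a * b) = deg a + deg b) (deg_pos : ∀ x, 0 < deg (g x))
    (hp : ∀ x, p x - of R M (g x) ∈ Submodule.span R
      (of R M '' {c | deg c = deg (g x) ∧ ∃ a b, 0 < deg a ∧ 0 < deg b ∧ a * b = c})) :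
    Function.Bijective (FreeAlgebra.lift R p) := by
  -- A word of length `n` and degree `d` has weight `d - n`, so only single letters reach `d - 1`.
  let weight (w : FreeMonoid X) : ℕ := (w.toList.map fun x ↦ deg (g x) - 1).sum
  have weight_of (x : X) : weight (.of x) = deg (g x) - 1 := by
    simp only [weight, FreeMonoid.toList_of, List.map_singleton, List.sum_singleton]
  have weight_mul (u v : FreeMonoid X) : weight (u * v) = weight u + weight v := by
    simp only [weight, FreeMonoid.toList_mul, List.map_append, List.sum_append]
  have weight_le (w : FreeMonoid X) : weight w ≤ deg (FreeMonoid.lift g w) - 1 := by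
    induction w using FreeMonoid.inductionOn' with
    | one => exact Nat.zero_le _
    | of_mul x w ih =>
      have := deg_pos x
      rw [weight_mul, weight_of, map_mul, FreeMonoid.lift_eval_of, deg_mul]
      omega
  refine freeAlgebra_lift_bijective_of_weight hg weight_mul fun x ↦
    span_of_image_mono ?_ (hp x)
  rintro _ ⟨hdeg, a, b, ha, hb, rfl⟩
  obtain ⟨u, rfl⟩ := hg.surjective a
  obtain ⟨v, rfl⟩ := hg.surjective b
  refine ⟨u * v, ?_, map_mul ..⟩
  have hu := weight_le u
  have hv := weight_le v
  rw [Set.mem_ofPred_eq, weight_mul, weight_of, ← hdeg, deg_mul]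
  omega

end Perturbation

section PrimitiveGenerators

namespace BDiagram

open MonoidAlgebra (of)
open scoped Pointwise

/-- The span of the B-diagrams with `n` vertices. -/
noncomputable def homogeneous (n : ℕ) : Submodule ℂ (MonoidAlgebra ℂ BDiagram) :=
  Submodule.span ℂ (of ℂ _ '' {A : BDiagram | A.1.nv = n})

variable {A : BDiagram} {I : Finset ℕ}

theorem of_mem_homogeneous (A : BDiagram) : of ℂ _ A ∈ homogeneous A.1.nv :=
  of_mem_span_of_image rfl

theorem of_sub_mem_homogeneous (hI : I ⊆ Finset.Icc 1 A.1.nv) :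
    of ℂ _ (A.sub I) ∈ homogeneous I.card := by
  rw [← BD.nv_sub hI, ← coe_sub hI]
  exact of_mem_homogeneous _

theorem mul_mem_of_homogeneous {m n : ℕ} {s : Set BDiagram} {a b : MonoidAlgebra ℂ BDiagram}
    (ha : a ∈ homogeneous m) (hb : b ∈ homogeneous n)
    (hs : ∀ A B : BDiagram, A.1.nv = m → B.1.nv = n → A * B ∈ s) :
    a * b ∈ Submodule.span ℂ (of ℂ _ '' s) := by
  have hab := Submodule.mul_mem_mul ha hb
  rw [homogeneous, homogeneous, span_of_image_mul] at hab
  exact span_of_image_mono (Set.mul_subset_iff.2 fun A hA B hB ↦ hs A B hA hB) hab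

theorem mul_mem_homogeneous {m n : ℕ} {a b : MonoidAlgebra ℂ BDiagram} (ha : a ∈ homogeneous m)
    (hb : b ∈ homogeneous n) : a * b ∈ homogeneous (m + n) :=
  mul_mem_of_homogeneous ha hb fun A B hA hB ↦ by rw [Set.mem_ofPred_eq, nv_mul, hA, hB]

theorem primitivePart_mem_homogeneous {m : ℕ} (hI : I ∈ A.1.isolatedSets) :
    primitivePart A.1.isolatedSets (fun J ↦ of ℂ _ (A.sub J)) m I ∈ homogeneous I.card := by
  induction hn : I.card using Nat.strong_induction_on generalizing I with
  | _ n ih =>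
    have hIcc := (BD.mem_isolatedSets.1 hI).1
    rw [primitivePart_eq, ← hn]
    refine sub_mem (of_sub_mem_homogeneous hIcc) (sum_mem fun B hB ↦ ?_)
    obtain ⟨hB, hBI, -⟩ := Finset.mem_filter.1 hB
    rw [← Finset.card_sdiff_add_card_eq_card hBI.subset, add_comm]
    exact mul_mem_homogeneous (ih _ (hn ▸ Finset.card_lt_card hBI) hB rfl)
      (of_sub_mem_homogeneous (Finset.sdiff_subset.trans hIcc))

/-- The primitive element with leading term the B-diagram `A`. -/
noncomputable def primitiveGenerator (A : BDiagram) : MonoidAlgebra ℂ BDiagram :=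
  primitivePart A.1.isolatedSets (fun I ↦ of ℂ _ (A.sub I)) 1 (Finset.Icc 1 A.1.nv)

theorem Icc_mem_isolatedSets (A : BDiagram) : Finset.Icc 1 A.1.nv ∈ A.1.isolatedSets :=
  BD.mem_isolatedSets.2 ⟨subset_rfl, A.2.isolated_Icc⟩

theorem primitiveGenerator_mem (hA : 0 < A.1.nv) :
    primitiveGenerator A ∈ primitiveSubalgebra comul :=
  (isComultiplicative_sub A).primitivePart_mem_primitiveSubalgebra (Icc_mem_isolatedSets A)
    (Finset.mem_Icc.2 ⟨le_rfl, hA⟩)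

theorem primitiveGenerator_sub_of_mem (A : BDiagram) :
    primitiveGenerator A - of ℂ _ A ∈ Submodule.span ℂ (of ℂ _ '' {C : BDiagram |
      C.1.nv = A.1.nv ∧ ∃ B B' : BDiagram, 0 < B.1.nv ∧ 0 < B'.1.nv ∧ B * B' = C}) := by
  rw [primitiveGenerator, primitivePart_eq, sub_Icc, sub_sub_cancel_left]
  refine neg_mem (sum_mem fun I hI ↦ ?_)
  obtain ⟨hI, hlt, hmem⟩ := Finset.mem_filter.1 hI
  have hcard := Finset.card_sdiff_add_card_eq_card hlt.subset
  have hcard_pos : 0 < I.card := Finset.card_pos.2 ⟨1, hmem⟩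
  have hcard_sdiff_pos : 0 < (Finset.Icc 1 A.1.nv \ I).card :=
    Finset.card_pos.2 (Finset.sdiff_nonempty.2 hlt.2)
  refine mul_mem_of_homogeneous (primitivePart_mem_homogeneous hI)
    (of_sub_mem_homogeneous Finset.sdiff_subset) fun B B' hB hB' ↦
    ⟨?_, B, B', hB ▸ hcard_pos, hB' ▸ hcard_sdiff_pos, rfl⟩
  rw [nv_mul, hB, hB', add_comm, hcard, Nat.card_Icc, Nat.add_sub_cancel]

theorem nv_pos (g : GSet) : 0 < g.1.1.nv :=
  Nat.pos_of_ne_zero fun h ↦ g.2.1 (congrArg Subtype.val (eq_one_of_nv_eq_zero g.1 h))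

/-- The algebra morphism that sends each free generator `g` to the primitive element with leading
term `g`. -/
noncomputable def ofFreeAlgebra : FreeAlgebra ℂ GSet →ₐ[ℂ] MonoidAlgebra ℂ BDiagram :=
  FreeAlgebra.lift ℂ fun g : GSet ↦ primitiveGenerator g.1

theorem ofFreeAlgebra_bijective : Function.Bijective ofFreeAlgebra :=
  freeAlgebra_lift_bijective_of_decomposable lift_indiv_bijective nv_mul nv_pos
    fun g ↦ primitiveGenerator_sub_of_mem g.1

theorem comul_ofFreeAlgebra (x : FreeAlgebra ℂ GSet) :
    comul (ofFreeAlgebra x) =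
      Algebra.TensorProduct.map ofFreeAlgebra ofFreeAlgebra (freeCoproduct ℂ GSet x) := by
  have h : comul.comp ofFreeAlgebra =
      (Algebra.TensorProduct.map ofFreeAlgebra ofFreeAlgebra).comp (freeCoproduct ℂ GSet) := by
    refine FreeAlgebra.hom_ext (funext fun g ↦ ?_)
    have hg : ofFreeAlgebra (FreeAlgebra.ι ℂ g) = primitiveGenerator g.1 :=
      FreeAlgebra.lift_ι_apply ..
    have hprim := mem_primitiveSubalgebra.1 (primitiveGenerator_mem (nv_pos g))
    simp only [Function.comp_apply, AlgHom.comp_apply, freeCoproduct_ι, map_add,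
      Algebra.TensorProduct.map_tmul, map_one, hg, hprim]
  exact DFunLike.congr_fun h x

end BDiagram

end PrimitiveGenerators

/-! ### Extensions -/

namespace BD

section Extensions

variable {A B D D' G : BD} {E E₁ E₂ s : Finset (ℕ × ℕ)}

open scoped Classical in
/-- The sets of edges obtained by adding to those of `G` edges between its free half-edges. -/
noncomputable def extensions (G : BD) : Finset (Finset (ℕ × ℕ)) :=
  (G.up ×ˢ G.dn).powerset.filter (fun E ↦ G.ed ⊆ E ∧ (G.withEdges E).Valid)

theorem Valid.subset_product_of_withEdges (h : (G.withEdges E).Valid) : E ⊆ G.up ×ˢ G.dn :=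
  fun p hp ↦ Finset.mem_product.2 ⟨(h.2.2.2.1 p hp).1, (h.2.2.2.1 p hp).2.1⟩

theorem mem_extensions : E ∈ G.extensions ↔ G.ed ⊆ E ∧ (G.withEdges E).Valid := by
  simp only [extensions, Finset.mem_filter, Finset.mem_powerset, and_iff_right_iff_imp]
  exact fun h ↦ h.2.subset_product_of_withEdges

theorem Valid.ed_mem_extensions (hG : G.Valid) : G.ed ∈ G.extensions :=
  mem_extensions.2 ⟨subset_rfl, hG⟩

theorem mem_matchings : s ∈ matchings A B ↔ Matching A B s := by
  simp only [matchings, Finset.mem_filter, Finset.mem_powerset, and_iff_right_iff_imp]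
  exact fun h p hp ↦ Finset.mem_product.2 (h.1 p hp)

theorem extensions_eps : eps.extensions = {∅} := by
  ext E
  rw [mem_extensions, Finset.mem_singleton]
  constructor
  · exact fun h ↦ Finset.subset_empty.1 h.2.subset_product_of_withEdges
  · rintro rfl
    exact ⟨subset_rfl, eps_valid⟩

theorem card_sdiff_lt_of_mem_extensions (hE : E ∈ G.extensions) (hne : E ≠ G.ed) :
    ((G.up ×ˢ G.dn) \ E).card < ((G.up ×ˢ G.dn) \ G.ed).card := by
  obtain ⟨hle, hvalid⟩ := mem_extensions.1 hE
  obtain ⟨p, hpE, hp⟩ := Finset.exists_of_ssubset (hle.ssubset_of_ne hne.symm)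
  refine Finset.card_lt_card ((Finset.ssubset_iff_of_subset
    (Finset.sdiff_subset_sdiff subset_rfl hle)).2 ⟨p, ?_, fun h ↦ (Finset.mem_sdiff.1 h).2 hpE⟩)
  exact Finset.mem_sdiff.2 ⟨hvalid.subset_product_of_withEdges hpE, hp⟩

namespace Embedding

theorem edgesBetween_mem_extensions (e : Embedding D G) (hE : E ∈ G.extensions) :
    e.edgesBetween e E ∈ D.extensions := by
  obtain ⟨hle, hvalid⟩ := mem_extensions.1 hE
  refine mem_extensions.2 ⟨?_, (e.withEdges E).valid hvalid⟩
  rw [← e.edgesBetween_self_ed]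
  exact edgesBetween_mono hle

variable {e : Embedding D G} {e' : Embedding D' G}

theorem glue_mono {F₁ F₂ t : Finset (ℕ × ℕ)} (h₁ : E₁ ⊆ F₁) (h₂ : E₂ ⊆ F₂) (hs : s ⊆ t) :
    e.glue e' E₁ E₂ s ⊆ e.glue e' F₁ F₂ t :=
  Finset.union_subset_union (Finset.union_subset_union (Finset.image_subset_image h₁)
    (Finset.image_subset_image hs)) (Finset.image_subset_image h₂)

theorem edgesBetween_eq_empty_of_lt (hlt : ∀ i ∈ e.range, ∀ j ∈ e'.range, i < j)
    (hE : (G.withEdges E).Valid) : e'.edgesBetween e E = ∅ := by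
  refine Finset.eq_empty_of_forall_notMem fun p hp ↦ ?_
  obtain ⟨hp, hpE⟩ := mem_edgesBetween.1 hp
  obtain ⟨hp₁, hp₂⟩ := Finset.mem_product.1 hp
  exact lt_asymm (hE.2.2.2.1 _ hpE).2.2
    (hlt _ (e.v_half_mem_range hp₂) _ (e'.v_half_mem_range hp₁))

variable (hc : e'.range = Finset.Icc 1 G.nv \ e.range)

include hc

theorem isolated_withEdges_iff (hE : E ⊆ Finset.Icc 1 G.omega ×ˢ Finset.Icc 1 G.omega) :
    (G.withEdges E).Isolated e.range ↔ e.edgesBetween e' E = ∅ ∧ e'.edgesBetween e E = ∅ := by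
  have hdisj := Finset.disjoint_left.1 (disjoint_range hc)
  have he := @v_half_mem_range D G e
  have he' := @v_half_mem_range D' G e'
  simp only [Finset.eq_empty_iff_forall_notMem, mem_edgesBetween, Finset.mem_product]
  constructor
  · exact fun h ↦ ⟨fun p hp ↦ hdisj ((h _ hp.2).1 (he hp.1.1)) (he' hp.1.2),
      fun p hp ↦ hdisj ((h _ hp.2).2 (he hp.1.2)) (he' hp.1.1)⟩
  · rintro ⟨h, h'⟩ ⟨k, l⟩ hp
    obtain ⟨hk, hl⟩ := Finset.mem_product.1 (hE hp)
    obtain ⟨a, ha, rfl⟩ | ⟨a, ha, rfl⟩ := exists_half_eq hc hk <;>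
      obtain ⟨b, hb, rfl⟩ | ⟨b, hb, rfl⟩ := exists_half_eq hc hl
    · exact iff_of_true (he ha) (he hb)
    · exact absurd ⟨⟨ha, hb⟩, hp⟩ (h (a, b))
    · exact absurd ⟨⟨ha, hb⟩, hp⟩ (h' (a, b))
    · exact iff_of_false (fun h ↦ hdisj h (he' ha)) fun h ↦ hdisj h (he' hb)

theorem glue_mem_extensions (hG : G.Valid) (hiso : G.Isolated e.range)
    (hE₁ : E₁ ∈ D.extensions) (hE₂ : E₂ ∈ D'.extensions)
    (hs : Matching (D.withEdges E₁) (D'.withEdges E₂) s)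
    (hv : ∀ p ∈ s, G.v (e.half p.1) < G.v (e'.half p.2)) :
    e.glue e' E₁ E₂ s ∈ G.extensions := by
  rw [mem_extensions] at *
  have hed : G.ed ⊆ Finset.Icc 1 G.omega ×ˢ Finset.Icc 1 G.omega := fun _ ↦ hG.mem_Icc_of_mem_ed
  obtain ⟨hcross, hcross'⟩ := (isolated_withEdges_iff hc hed).1 hiso
  refine ⟨?_, valid_glue ?_ (disjoint_range hc) hE₁.2 hE₂.2 hs hv⟩
  · rw [← glue_edgesBetween hc hed hcross', edgesBetween_self_ed, edgesBetween_self_ed, hcross]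
    exact glue_mono hE₁.1 hE₂.1 (Finset.empty_subset s)
  · exact valid_withEdges_iff.2 ⟨hG.1, hG.2.1, hG.2.2.1, by simp, by simp, by simp⟩

theorem sum_extensions_filter_isolated {M : Type*} [AddCommMonoid M] (hG : G.Valid)
    (hiso : G.Isolated e.range) (f : Finset (ℕ × ℕ) → Finset (ℕ × ℕ) → M)
    [DecidablePred fun E ↦ (G.withEdges E).Isolated e.range] :
    ∑ E ∈ G.extensions with (G.withEdges E).Isolated e.range,
      f (e.edgesBetween e E) (e'.edgesBetween e' E) =
        ∑ E ∈ D.extensions ×ˢ D'.extensions, f E.1 E.2 := by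
  have hd : Disjoint e.range e'.range := disjoint_range hc
  have hIcc {K : BD} {F : Finset (ℕ × ℕ)} (h : F ∈ K.extensions) :
      F ⊆ Finset.Icc 1 K.omega ×ˢ Finset.Icc 1 K.omega :=
    (mem_extensions.1 h).2.subset_Icc_of_withEdges
  refine Finset.sum_bij' (fun E _ ↦ (e.edgesBetween e E, e'.edgesBetween e' E))
    (fun E _ ↦ e.glue e' E.1 E.2 ∅) (fun E hE ↦ ?_) (fun E hE ↦ ?_) (fun E hE ↦ ?_)
    (fun E hE ↦ ?_) fun _ _ ↦ rfl
  all_goals simp only [Finset.mem_filter, Finset.mem_product] at *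
  · exact ⟨e.edgesBetween_mem_extensions hE.1, e'.edgesBetween_mem_extensions hE.1⟩
  · have hglue := glue_mem_extensions hc hG hiso hE.1 hE.2 matching_empty
      fun p hp ↦ absurd hp (Finset.notMem_empty p)
    refine ⟨hglue, (isolated_withEdges_iff hc (hIcc hglue)).2 ⟨?_, ?_⟩⟩
    · exact edgesBetween_glue hd (hIcc hE.1) (hIcc hE.2) (Finset.empty_subset _)
    · exact edgesBetween_glue_swap hd (hIcc hE.1) (hIcc hE.2) (Finset.empty_subset _)
  · obtain ⟨hcross, hcross'⟩ := (isolated_withEdges_iff hc (hIcc hE.1)).1 hE.2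
    rw [← hcross, glue_edgesBetween hc (hIcc hE.1) hcross']
  · refine Prod.ext ?_ ?_
    · exact edgesBetween_glue_left hd (hIcc hE.1) (hIcc hE.2) (Finset.empty_subset _)
    · exact edgesBetween_glue_right hd (hIcc hE.1) (hIcc hE.2) (Finset.empty_subset _)

theorem sum_extensions_of_lt {M : Type*} [AddCommMonoid M] (hG : G.Valid)
    (hiso : G.Isolated e.range) (hlt : ∀ i ∈ e.range, ∀ j ∈ e'.range, i < j)
    (f : Finset (ℕ × ℕ) → M) :
    ∑ E ∈ G.extensions, f E = ∑ E ∈ D.extensions ×ˢ D'.extensions,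
      ∑ s ∈ matchings (D.withEdges E.1) (D'.withEdges E.2), f (e.glue e' E.1 E.2 s) := by
  have hd : Disjoint e.range e'.range := disjoint_range hc
  have hIcc {K : BD} {F : Finset (ℕ × ℕ)} (h : F ∈ K.extensions) :
      F ⊆ Finset.Icc 1 K.omega ×ˢ Finset.Icc 1 K.omega :=
    (mem_extensions.1 h).2.subset_Icc_of_withEdges
  have hglue {E : Finset (ℕ × ℕ)} (hE : E ∈ G.extensions) :
      e.glue e' (e.edgesBetween e E) (e'.edgesBetween e' E) (e.edgesBetween e' E) = E :=
    glue_edgesBetween hc (hIcc hE) (edgesBetween_eq_empty_of_lt hlt (mem_extensions.1 hE).2)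
  rw [Finset.sum_sigma']
  refine Finset.sum_bij' (fun E _ ↦ ⟨(e.edgesBetween e E, e'.edgesBetween e' E),
      e.edgesBetween e' E⟩) (fun E _ ↦ e.glue e' E.1.1 E.1.2 E.2)
    (fun E hE ↦ ?_) (fun ⟨E, s⟩ hE ↦ ?_) (fun E hE ↦ hglue hE) (fun ⟨E, s⟩ hE ↦ ?_)
    fun E hE ↦ by rw [hglue hE]
  · simp only [Finset.mem_sigma, Finset.mem_product, mem_matchings]
    exact ⟨⟨e.edgesBetween_mem_extensions hE, e'.edgesBetween_mem_extensions hE⟩,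
      matching_edgesBetween (mem_extensions.1 hE).2 hd⟩
  all_goals
    simp only [Finset.mem_sigma, Finset.mem_product, mem_matchings] at hE
    obtain ⟨⟨hE₁, hE₂⟩, hs⟩ := hE
    have hs_Icc : s ⊆ Finset.Icc 1 D.omega ×ˢ Finset.Icc 1 D'.omega :=
      Matching.mem_Icc (G := D.withEdges E.1) (D := D'.withEdges E.2)
        (mem_extensions.1 hE₁).2.2.1 (mem_extensions.1 hE₂).2.2.2.1 hs
  · refine glue_mem_extensions hc hG hiso hE₁ hE₂ hs fun p hp ↦ ?_
    obtain ⟨hp₁, hp₂⟩ := Finset.mem_product.1 (hs_Icc hp)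
    exact hlt _ (e.v_half_mem_range hp₁) _ (e'.v_half_mem_range hp₂)
  · rw [edgesBetween_glue_left hd (hIcc hE₁) (hIcc hE₂) hs_Icc,
      edgesBetween_glue_right hd (hIcc hE₁) (hIcc hE₂) hs_Icc,
      edgesBetween_glue hd (hIcc hE₁) (hIcc hE₂) hs_Icc]

end Embedding

end Extensions

end BD

section ExtensionMap

variable {A B : BD}

theorem mkB_coe (A : BDiagram) : mkB A.1 = Finsupp.single A 1 := dif_pos A.2

theorem liftB_mkB {V : Type*} [AddCommMonoid V] [Module ℂ V] (f : BDiagram → V) (A : BDiagram) :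
    liftB f (mkB A.1) = f A := by
  rw [mkB_coe, liftB, Finsupp.lsum_single, LinearMap.toSpanSingleton_apply, one_smul]

theorem starB_mkB (hA : A.Valid) (hB : B.Valid) :
    starB (mkB A) (mkB B) = ∑ s ∈ BD.matchings A B, mkB (BD.comp A B s) := by
  rw [starB, liftB_mkB _ ⟨A, hA⟩, liftB_mkB _ ⟨B, hB⟩, mulfun]

theorem deltaL_mkB (hA : A.Valid) : deltaL (mkB A) =
    ∑ I ∈ A.isolatedSets, mkB (A.sub I) ⊗ₜ[ℂ] mkB (A.sub (Finset.Icc 1 A.nv \ I)) := by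
  rw [deltaL, liftB_mkB _ ⟨A, hA⟩]
  rfl

namespace BDiagram

open MonoidAlgebra (of)

/-- The linear map that sends a B-diagram to the sum of all the B-diagrams obtained from it by
adding edges between its free half-edges. It turns juxtaposition into the product `⋆`. -/
noncomputable def sumExtensions : MonoidAlgebra ℂ BDiagram →ₗ[ℂ] BSpace :=
  liftB (fun A ↦ ∑ E ∈ A.1.extensions, mkB (A.1.withEdges E)) ∘ₗ
    (MonoidAlgebra.coeffLinearEquiv ℂ).toLinearMap

theorem sumExtensions_of (A : BDiagram) :
    sumExtensions (of ℂ _ A) = ∑ E ∈ A.1.extensions, mkB (A.1.withEdges E) :=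
  (congrArg _ (mkB_coe A).symm).trans (liftB_mkB _ A)

theorem sumExtensions_bijective : Function.Bijective sumExtensions := by
  refine bijective_of_unitriangular (b := Module.Basis.ofRepr (MonoidAlgebra.coeffLinearEquiv ℂ))
    (c := Finsupp.basisSingleOne) (T := sumExtensions)
    (ρ := fun A : BDiagram ↦ ((A.1.up ×ˢ A.1.dn) \ A.1.ed).card) fun A ↦ ?_
  have hbasis (A : BDiagram) : (Finsupp.basisSingleOne A : BSpace) = mkB A.1 := by
    rw [Finsupp.coe_basisSingleOne, mkB_coe]
  change sumExtensions (of ℂ _ A) - _ ∈ _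
  rw [sumExtensions_of, ← Finset.add_sum_erase _ _ A.2.ed_mem_extensions, hbasis]
  change mkB A.1 + _ - mkB A.1 ∈ _
  rw [add_sub_cancel_left]
  refine sum_mem fun E hE ↦ Submodule.subset_span ?_
  obtain ⟨hne, hE⟩ := Finset.mem_erase.1 hE
  exact ⟨⟨_, (BD.mem_extensions.1 hE).2⟩, BD.card_sdiff_lt_of_mem_extensions hE hne, hbasis _⟩

theorem sumExtensions_one : sumExtensions 1 = unitB := by
  rw [← map_one (of ℂ BDiagram), sumExtensions_of, coe_one, BD.extensions_eps,
    Finset.sum_singleton]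
  exact mkB_coe 1

theorem sumExtensions_of_mul (A B : BDiagram) : sumExtensions (of ℂ _ (A * B)) =
    starB (sumExtensions (of ℂ _ A)) (sumExtensions (of ℂ _ B)) := by
  rw [sumExtensions_of, coe_mul, BD.Embedding.sum_extensions_of_lt (BD.range_juxtRight A.2 B.2)
    (A * B).2 (BD.isolated_range_juxtLeft A.2 B.2) (BD.lt_of_mem_range_juxt A.2 B.2),
    sumExtensions_of, sumExtensions_of, map_sum starB, LinearMap.sum_apply, Finset.sum_product]
  refine Finset.sum_congr rfl fun E₁ hE₁ ↦ ?_
  rw [map_sum]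
  refine Finset.sum_congr rfl fun E₂ hE₂ ↦ ?_
  rw [starB_mkB (BD.mem_extensions.1 hE₁).2 (BD.mem_extensions.1 hE₂).2]
  exact Finset.sum_congr rfl fun s _ ↦ by rw [BD.comp_withEdges A.2 B.2]

theorem sumExtensions_mul (a b : MonoidAlgebra ℂ BDiagram) :
    sumExtensions (a * b) = starB (sumExtensions a) (sumExtensions b) := by
  have h : (LinearMap.mul ℂ _).compr₂ sumExtensions =
      starB.compl₁₂ sumExtensions sumExtensions :=
    MonoidAlgebra.lhom_ext' fun A ↦ LinearMap.ext_ring <| MonoidAlgebra.lhom_ext' fun B ↦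
      LinearMap.ext_ring <| by
      have := sumExtensions_of_mul A B
      rw [map_mul] at this
      exact this
  exact LinearMap.congr_fun₂ h a b

open scoped Classical in
theorem sumExtensions_tmul_sumExtensions {A B B' : BDiagram} {e : BD.Embedding B.1 A.1}
    {e' : BD.Embedding B'.1 A.1} (hc : e'.range = Finset.Icc 1 A.1.nv \ e.range)
    (hiso : A.1.Isolated e.range) :
    sumExtensions (of ℂ _ B) ⊗ₜ[ℂ] sumExtensions (of ℂ _ B') =
      ∑ E ∈ A.1.extensions with (A.1.withEdges E).Isolated e.range,
        mkB ((A.1.withEdges E).sub e.range) ⊗ₜ[ℂ] mkB ((A.1.withEdges E).sub e'.range) := by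
  simp only [sumExtensions_of, TensorProduct.sum_tmul, TensorProduct.tmul_sum]
  rw [← Finset.sum_product_right', ← BD.Embedding.sum_extensions_filter_isolated hc A.2 hiso
    fun E₁ E₂ ↦ mkB (B.1.withEdges E₁) ⊗ₜ[ℂ] mkB (B'.1.withEdges E₂)]
  refine Finset.sum_congr rfl fun E hE ↦ ?_
  have hvalid := (BD.mem_extensions.1 (Finset.mem_filter.1 hE).1).2
  rw [← (e.withEdges E).sub_range hvalid, ← (e'.withEdges E).sub_range hvalid]
  rfl

open scoped Classical in
theorem deltaL_sumExtensions_of (A : BDiagram) : deltaL (sumExtensions (of ℂ _ A)) =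
    TensorProduct.map sumExtensions sumExtensions (comul (of ℂ _ A)) := by
  have hdelta : deltaL (sumExtensions (of ℂ _ A)) = ∑ E ∈ A.1.extensions,
      ∑ I ∈ (A.1.withEdges E).isolatedSets, mkB ((A.1.withEdges E).sub I) ⊗ₜ[ℂ]
        mkB ((A.1.withEdges E).sub (Finset.Icc 1 A.1.nv \ I)) := by
    rw [sumExtensions_of, map_sum]
    exact Finset.sum_congr rfl fun E hE ↦ deltaL_mkB (BD.mem_extensions.1 hE).2
  have hcomm (E : Finset (ℕ × ℕ)) (I : Finset ℕ) :
      E ∈ A.1.extensions ∧ I ∈ (A.1.withEdges E).isolatedSets ↔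
        (E ∈ {E ∈ A.1.extensions | (A.1.withEdges E).Isolated I}) ∧ I ∈ A.1.isolatedSets := by
    simp only [BD.mem_isolatedSets, Finset.mem_filter]
    exact ⟨fun ⟨hE, hI, hiso⟩ ↦
      ⟨⟨hE, hiso⟩, hI, fun p hp ↦ hiso p ((BD.mem_extensions.1 hE).1 hp)⟩,
      fun ⟨⟨hE, hiso⟩, hI, _⟩ ↦ ⟨hE, hI, hiso⟩⟩
  rw [hdelta, Finset.sum_comm' hcomm, comul_of, comulBasis, map_sum]
  refine Finset.sum_congr rfl fun I hI ↦ ?_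
  obtain ⟨hI, hiso⟩ := BD.mem_isolatedSets.1 hI
  let e : BD.Embedding (A.sub I).1 A.1 := BD.subEmbedding A.2 Finset.inter_subset_left
  let e' : BD.Embedding (A.sub (Finset.Icc 1 A.1.nv \ I)).1 A.1 :=
    BD.subEmbedding A.2 Finset.inter_subset_left
  have he : e.range = I :=
    (BD.range_subEmbedding A.2 _).trans (Finset.inter_eq_right.2 hI)
  have he' : e'.range = Finset.Icc 1 A.1.nv \ I :=
    (BD.range_subEmbedding A.2 _).trans (Finset.inter_eq_right.2 Finset.sdiff_subset)
  rw [TensorProduct.map_tmul, sumExtensions_tmul_sumExtensions (e := e) (e' := e')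
    (by rw [he, he']) (he.symm ▸ hiso), he, he']

theorem deltaL_sumExtensions (a : MonoidAlgebra ℂ BDiagram) : deltaL (sumExtensions a) =
    TensorProduct.map sumExtensions sumExtensions (comul a) := by
  have h : deltaL ∘ₗ sumExtensions =
      TensorProduct.map sumExtensions sumExtensions ∘ₗ comul.toLinearMap :=
    MonoidAlgebra.lhom_ext' fun A ↦ LinearMap.ext_ring (deltaL_sumExtensions_of A)
  exact LinearMap.congr_fun h a

end BDiagram

end ExtensionMap

section Comparison

namespace BDiagram

/-- The identification of the free algebra on `𝔾` with `ℬ`. It is an isomorphism of bialgebras,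
although the algebra structure `⋆` of `ℬ` is not recorded as an instance. -/
noncomputable def freeAlgebraEquiv : FreeAlgebra ℂ GSet ≃ₗ[ℂ] BSpace :=
  LinearEquiv.ofBijective (sumExtensions ∘ₗ ofFreeAlgebra.toLinearMap)
    (sumExtensions_bijective.comp ofFreeAlgebra_bijective)

theorem freeAlgebraEquiv_apply (x : FreeAlgebra ℂ GSet) :
    freeAlgebraEquiv x = sumExtensions (ofFreeAlgebra x) := rfl

theorem freeAlgebraEquiv_one : freeAlgebraEquiv 1 = unitB := by
  rw [freeAlgebraEquiv_apply, map_one, sumExtensions_one]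

theorem freeAlgebraEquiv_mul (x y : FreeAlgebra ℂ GSet) :
    freeAlgebraEquiv (x * y) = starB (freeAlgebraEquiv x) (freeAlgebraEquiv y) := by
  simp only [freeAlgebraEquiv_apply, map_mul, sumExtensions_mul]

theorem freeAlgebraEquiv_lie (x y : FreeAlgebra ℂ GSet) : freeAlgebraEquiv ⁅x, y⁆ =
    starB (freeAlgebraEquiv x) (freeAlgebraEquiv y) -
      starB (freeAlgebraEquiv y) (freeAlgebraEquiv x) := by
  rw [LieRing.of_associative_ring_bracket, map_sub, freeAlgebraEquiv_mul, freeAlgebraEquiv_mul]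

theorem deltaL_freeAlgebraEquiv (x : FreeAlgebra ℂ GSet) : deltaL (freeAlgebraEquiv x) =
    TensorProduct.congr freeAlgebraEquiv freeAlgebraEquiv (freeCoproduct ℂ GSet x) := by
  rw [freeAlgebraEquiv_apply, deltaL_sumExtensions, comul_ofFreeAlgebra]
  exact (LinearMap.congr_fun (TensorProduct.map_comp ..) _).symm

theorem freeAlgebraEquiv_mem_PrimB_iff (x : FreeAlgebra ℂ GSet) :
    freeAlgebraEquiv x ∈ PrimB ↔ x ∈ primitiveSubalgebra (freeCoproduct ℂ GSet) := by
  rw [PrimB, Set.mem_ofPred_eq, mem_primitiveSubalgebra, deltaL_freeAlgebraEquiv,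
    ← freeAlgebraEquiv_one, ← TensorProduct.congr_tmul, ← TensorProduct.congr_tmul, ← map_add]
  exact (TensorProduct.congr freeAlgebraEquiv freeAlgebraEquiv).injective.eq_iff

theorem image_freeAlgebraEquiv :
    freeAlgebraEquiv '' primitiveSubalgebra (freeCoproduct ℂ GSet) = PrimB := by
  ext x
  rw [LinearEquiv.image_eq_preimage_symm, Set.mem_preimage, SetLike.mem_coe,
    ← freeAlgebraEquiv_mem_PrimB_iff, LinearEquiv.apply_symm_apply]

end BDiagram

end Comparison

/-- the primitive elements of ℬ form a Lie algebra for the bracket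
`[x,y] = x ⋆ y − y ⋆ x`, isomorphic to the free Lie algebra on the nonempty
indivisible B-diagrams. -/
theorem primB_free_lie :
    (∀ x ∈ PrimB, ∀ y ∈ PrimB, starB x y - starB y x ∈ PrimB) ∧
    (∃ f : FreeLieAlgebra ℂ GSet → BSpace,
      IsLinearMap ℂ f ∧ Function.Injective f ∧ Set.range f = PrimB ∧
      ∀ x y : FreeLieAlgebra ℂ GSet, f ⁅x, y⁆ = starB (f x) (f y) - starB (f y) (f x)) := by
  let f : FreeLieAlgebra ℂ GSet →ₗ[ℂ] BSpace :=
    BDiagram.freeAlgebraEquiv.toLinearMap ∘ₗ (freeLieToFreeAlgebra ℂ GSet).toLinearMap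
  have hf_inj : Function.Injective f :=
    BDiagram.freeAlgebraEquiv.injective.comp freeLieToFreeAlgebra_injective
  have hf_range : Set.range f = PrimB := by
    rw [← BDiagram.image_freeAlgebraEquiv, ← range_freeLieToFreeAlgebra, ← Set.range_comp]
    rfl
  have hf_lie (x y : FreeLieAlgebra ℂ GSet) : f ⁅x, y⁆ = starB (f x) (f y) - starB (f y) (f x) :=
    (congrArg _ (LieHom.map_lie _ x y)).trans (BDiagram.freeAlgebraEquiv_lie _ _)
  refine ⟨?_, f, f.isLinear, hf_inj, hf_range, hf_lie⟩
  rw [← hf_range]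
  rintro _ ⟨x, rfl⟩ _ ⟨y, rfl⟩
  exact ⟨⁅x, y⁆, hf_lie x y⟩
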